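/- arXiv:0705.2404 — 5 statements merged into one kernel-verified Lean document; each statement's English description precedes it below -/
import Mathlib

section
/- Let G be a nonempty position of the octal game 0.26, let H = H_k be a heap of maximal size appearing in G, and let X be G with one copy of H_k removed (so G = X + H). Then G is a misère P-position if and only if one of the following holds: (i) t(G) = 0 and g(G) = 1; (ii) t(G) ≠ 0, w(H) ≤ t(X), and g(G) = 0; or (iii) t(G) ≠ 0, w(H) ≥ t(X) + 2, and g(G) = 2. -/
/-!
The normal-play value of a heap `k ≥ 1` is `(k - 1) % 4`, and each kind of move changes the nim
value of a position by nim-adding a fixed `δ`: removing two beans without splitting has `δ = 2`,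
removing one bean from an even heap or splitting with an even part has `δ = 1`, and removing one
bean from an odd heap or splitting into two odd parts has `δ = 3`.

Say that a heap `h` dominates `G` with margin `d` if `w h ≥ t (G - h) + d`. As `w y < t k` whenever
`y ≤ k` and `w y ≠ 0`, for `d ≠ 0` this can only happen for a largest heap, so the theorem predicts
the P-positions to be those of value `1` with `t = 0`, and for `t ≠ 0` those of value `0` without
domination by margin `1` and those of value `2` with domination by margin `2`.

No move joins two predicted positions. Between the values `0` and `2` the only move is the removal
of two beans, which changes the margin by at most one. Positions with `t = 0` have no heaps other
than `1`, `2`, `5` and `6`; from there a move of shift `1` keeps `t = 0` and no move creates a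
dominating heap. Conversely, reaching `t = 0` from `t ≠ 0` by a move of shift `1` requires playing
on a dominating heap, and by a move of shift `3` on a heap with `w = 0`.

From every other position with a heap of size at least `2` there is an explicit move to a predicted
one. The nim value prescribes `δ` for each of the three kinds of target, and among the moves with
that `δ` one chooses according to how `w k`, for a largest heap `k`, compares with `t` of the rest.
-/

/-- The minimum excludant of a set of naturals. -/
noncomputable def mex (s : Set ℕ) : ℕ := sInf {n | n ∉ s}

/-- One legal move in the octal game 0.26. -/
def Move026 (G G' : Multiset ℕ) : Prop :=
  (∃ k ∈ G, 2 ≤ k ∧ G' = (k - 1) ::ₘ G.erase k) ∨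
  (∃ k ∈ G, 3 ≤ k ∧ G' = (k - 2) ::ₘ G.erase k) ∨
  (∃ k ∈ G, 4 ≤ k ∧ ∃ i j : ℕ, 1 ≤ i ∧ 1 ≤ j ∧ i + j = k - 2 ∧
    G' = i ::ₘ j ::ₘ G.erase k)

/-- The function `t` on single heaps for 0.26. -/
def t026 (k : ℕ) : ℕ :=
  if k ≤ 2 then 0 else if k ≤ 4 then 1 else (k - 5) / 2

/-- The function `w` on single heaps for 0.26. -/
def w026 (k : ℕ) : ℕ :=
  if k ≤ 8 then 0
  else if k ≤ 10 then 1
  else if k % 2 = 1 then (k - 7) / 2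
  else (k - 12) / 2

/-- `t` extended additively to positions. -/
def tPos026 (G : Multiset ℕ) : ℕ := (G.map t026).sum

namespace Octal026

/-! ### Uniqueness of solutions of the game recursions -/

section Recursions

lemma mex_eq {s : Set ℕ} {v : ℕ} (hv : v ∉ s) (hlt : ∀ m < v, m ∈ s) : mex s = v :=
  IsLeast.csInf_eq ⟨hv, fun _ hm => not_lt.1 fun h => hm (hlt _ h)⟩

variable {α : Type*} {move : α → α → Prop}

theorem eq_of_mex_rec (hwf : WellFounded (flip move)) {g v : α → ℕ}
    (hg : ∀ G, g G = mex {m | ∃ G', move G G' ∧ g G' = m})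
    (hv : ∀ G, v G = mex {m | ∃ G', move G G' ∧ v G' = m}) (G : α) : g G = v G := by
  induction G using hwf.induction with
  | _ G ih =>
    rw [hg, hv]
    congr! 5 with m G'
    exact and_congr_right fun hm => by rw [ih G' hm]

theorem iff_of_misere_rec (hwf : WellFounded (flip move)) {P Q : α → Prop}
    (hP : ∀ G, P G ↔ (∃ G', move G G') ∧ ∀ G', move G G' → ¬ P G')
    (hQ : ∀ G, Q G ↔ (∃ G', move G G') ∧ ∀ G', move G G' → ¬ Q G') (G : α) : P G ↔ Q G := by
  induction G using hwf.induction with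
  | _ G ih =>
    rw [hP, hQ]
    exact and_congr_right fun _ => forall₂_congr fun G' hm => not_congr (ih G' hm)

end Recursions

/-! ### Nim values -/

/-- The nim-sum of a multiset of naturals. -/
def xorSum (s : Multiset ℕ) : ℕ := s.fold (· ^^^ ·) 0

@[simp] lemma xorSum_cons (a : ℕ) (s : Multiset ℕ) : xorSum (a ::ₘ s) = a ^^^ xorSum s :=
  Multiset.fold_cons_left _ _ _ _

lemma xorSum_add (s u : Multiset ℕ) : xorSum (s + u) = xorSum s ^^^ xorSum u :=
  Multiset.fold_add (fun a b : ℕ => a ^^^ b) 0 0 s u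

lemma xorSum_lt_two_pow {s : Multiset ℕ} {n : ℕ} (hs : ∀ a ∈ s, a < 2 ^ n) :
    xorSum s < 2 ^ n := by
  induction s using Multiset.induction_on with
  | empty => exact Nat.two_pow_pos n
  | cons a s ih =>
    rw [Multiset.forall_mem_cons] at hs
    rw [xorSum_cons]
    exact Nat.xor_lt_two_pow hs.1 (ih hs.2)

-- Bouton's winning move in Nim.
lemma exists_mem_xor_lt {s : Multiset ℕ} {m : ℕ} (hm : m < xorSum s) :
    ∃ a ∈ s, a ^^^ (xorSum s ^^^ m) < a := by
  induction s using Multiset.induction_on generalizing m with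
  | empty => exact absurd hm (Nat.not_lt_zero m)
  | cons a s ih =>
    rw [xorSum_cons] at hm ⊢
    rcases Nat.lt_xor_cases hm with hlt | hlt
    · refine ⟨a, Multiset.mem_cons_self a s, ?_⟩
      rwa [Nat.xor_assoc, Nat.xor_xor_cancel_left, Nat.xor_comm]
    · obtain ⟨b, hb, hlt⟩ := ih hlt
      refine ⟨b, Multiset.mem_cons_of_mem hb, ?_⟩
      rwa [Nat.xor_comm a, Nat.xor_assoc, Nat.xor_comm a]

/-- The normal-play Grundy value of a heap of size `k`. Truncated subtraction gives the value `0`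
to the heap of size `0`, which like the heap of size `1` has no options. -/
def heapVal (k : ℕ) : ℕ := (k - 1) % 4

lemma heapVal_lt_four (k : ℕ) : heapVal k < 4 := Nat.mod_lt _ (by norm_num)

lemma heapVal_xor_lt_cases {h δ : ℕ} (hlt : heapVal h ^^^ δ < heapVal h) :
    (δ = 1 ∧ heapVal h % 2 = 1) ∨ ((δ = 2 ∨ δ = 3) ∧ 2 ≤ heapVal h) := by
  have hh := heapVal_lt_four h
  have hδ : δ < 4 := by
    rw [← Nat.xor_xor_cancel_left (heapVal h) δ]
    exact Nat.xor_lt_two_pow (n := 2) hh (hlt.trans hh)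
  interval_cases heapVal h <;> interval_cases δ <;> simp_all

/-- The nim-sum of the heap values of a position. -/
def nimVal (G : Multiset ℕ) : ℕ := xorSum (G.map heapVal)

@[simp] lemma nimVal_cons (h : ℕ) (Y : Multiset ℕ) :
    nimVal (h ::ₘ Y) = heapVal h ^^^ nimVal Y := by
  simp [nimVal]

@[simp] lemma nimVal_singleton (h : ℕ) : nimVal {h} = heapVal h := by
  rw [← Multiset.cons_zero, nimVal_cons]
  exact Nat.xor_zero _

lemma nimVal_add (s Y : Multiset ℕ) : nimVal (s + Y) = nimVal s ^^^ nimVal Y := by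
  rw [nimVal, Multiset.map_add, xorSum_add, nimVal, nimVal]

lemma nimVal_lt_four (G : Multiset ℕ) : nimVal G < 4 := by
  refine xorSum_lt_two_pow (n := 2) fun a ha => ?_
  obtain ⟨k, _, rfl⟩ := Multiset.mem_map.1 ha
  exact heapVal_lt_four k

lemma exists_mem_heapVal_xor_lt {G : Multiset ℕ} {m : ℕ} (hm : m < nimVal G) :
    ∃ h ∈ G, heapVal h ^^^ (nimVal G ^^^ m) < heapVal h := by
  obtain ⟨a, ha, hlt⟩ := exists_mem_xor_lt hm
  obtain ⟨h, hh, rfl⟩ := Multiset.mem_map.1 ha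
  exact ⟨h, hh, hlt⟩

lemma exists_mem_odd_heapVal {G : Multiset ℕ} (hG : nimVal G = 1) :
    ∃ h ∈ G, heapVal h % 2 = 1 := by
  obtain ⟨h, hh, hlt⟩ := exists_mem_heapVal_xor_lt (hG ▸ Nat.zero_lt_one)
  rw [hG] at hlt
  rcases heapVal_xor_lt_cases hlt with hcase | hcase
  · exact ⟨h, hh, hcase.2⟩
  · simp at hcase

lemma exists_mem_two_le_heapVal {G : Multiset ℕ} (hG : 2 ≤ nimVal G) :
    ∃ h ∈ G, 2 ≤ heapVal h := by
  obtain ⟨h, hh, hlt⟩ := exists_mem_heapVal_xor_lt (two_pos.trans_le hG)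
  rw [Nat.xor_zero] at hlt
  rcases heapVal_xor_lt_cases hlt with hcase | hcase
  · omega
  · exact ⟨h, hh, hcase.2⟩

/-! ### Moves and their effect on nim values -/

/-- `HeapOption δ h s` says that a legal move replaces the heap `h` by the heaps of `s`, and that
it changes the nim value by nim-adding `δ`: the constructors are the five ways of moving,
distinguished by the parities on which `δ` depends. -/
inductive HeapOption : ℕ → ℕ → Multiset ℕ → Prop
  | removeTwo {h : ℕ} (hh : 3 ≤ h) : HeapOption 2 h {h - 2}
  | removeOneEven {h : ℕ} (hh : 2 ≤ h) (heven : h % 2 = 0) : HeapOption 1 h {h - 1}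
  | removeOneOdd {h : ℕ} (hh : 3 ≤ h) (hodd : h % 2 = 1) : HeapOption 3 h {h - 1}
  | splitEven {h i j : ℕ} (hi : 1 ≤ i) (hj : 1 ≤ j) (hij : i + j + 2 = h)
      (heven : i % 2 = 0 ∨ j % 2 = 0) : HeapOption 1 h {i, j}
  | splitOdd {h i j : ℕ} (hij : i + j + 2 = h) (hi : i % 2 = 1) (hj : j % 2 = 1) :
      HeapOption 3 h {i, j}

namespace HeapOption

variable {δ h : ℕ} {s : Multiset ℕ}

lemma nimVal_eq (hs : HeapOption δ h s) : nimVal s = heapVal h ^^^ δ := by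
  have val_lt (k : ℕ) : heapVal k < 4 := heapVal_lt_four k
  cases hs <;> simp only [Multiset.insert_eq_cons, nimVal_cons, nimVal_singleton]
  case removeTwo hh =>
    have hval : heapVal (h - 2) = (heapVal h + 2) % 4 := by unfold heapVal; omega
    have hres : ∀ a < 4, (a + 2) % 4 = a ^^^ 2 := by decide
    rw [hval, hres _ (val_lt h)]
  case removeOneEven hh heven =>
    have hval : heapVal (h - 1) = (heapVal h + 3) % 4 := by unfold heapVal; omega
    have hres : ∀ a < 4, a % 2 = 1 → (a + 3) % 4 = a ^^^ 1 := by decide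
    rw [hval, hres _ (val_lt h) (by unfold heapVal; omega)]
  case removeOneOdd hh hodd =>
    have hval : heapVal (h - 1) = (heapVal h + 3) % 4 := by unfold heapVal; omega
    have hres : ∀ a < 4, a % 2 = 0 → (a + 3) % 4 = a ^^^ 3 := by decide
    rw [hval, hres _ (val_lt h) (by unfold heapVal; omega)]
  case splitEven i j hi hj hij heven =>
    have hval : heapVal h = (heapVal i + heapVal j + 3) % 4 := by unfold heapVal; omega
    have hres : ∀ a < 4, ∀ b < 4, a % 2 = 1 ∨ b % 2 = 1 →
        a ^^^ b = (a + b + 3) % 4 ^^^ 1 := by decide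
    rw [hval, hres _ (val_lt i) _ (val_lt j) (by unfold heapVal; omega)]
  case splitOdd i j hij hi hj =>
    have hval : heapVal h = (heapVal i + heapVal j + 3) % 4 := by unfold heapVal; omega
    have hres : ∀ a < 4, ∀ b < 4, a % 2 = 0 → b % 2 = 0 →
        a ^^^ b = (a + b + 3) % 4 ^^^ 3 := by decide
    rw [hval, hres _ (val_lt i) _ (val_lt j) (by unfold heapVal; omega) (by unfold heapVal; omega)]

lemma shift_ne_zero (hs : HeapOption δ h s) : δ ≠ 0 := by cases hs <;> norm_num

lemma sum_lt (hs : HeapOption δ h s) : s.sum < h := by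
  cases hs <;> simp only [Multiset.insert_eq_cons, Multiset.sum_cons, Multiset.sum_singleton] <;>
    omega

lemma lt_of_mem (hs : HeapOption δ h s) {i : ℕ} (hi : i ∈ s) : i < h :=
  (Multiset.le_sum_of_mem hi).trans_lt hs.sum_lt

lemma move (hs : HeapOption δ h s) (Y : Multiset ℕ) : Move026 (h ::ₘ Y) (s + Y) := by
  have hh : h ∈ h ::ₘ Y := Multiset.mem_cons_self h Y
  cases hs with
  | removeTwo h3 => exact .inr (.inl ⟨h, hh, h3, by simp⟩)
  | removeOneEven h2 _ => exact .inl ⟨h, hh, h2, by simp⟩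
  | removeOneOdd h3 _ => exact .inl ⟨h, hh, by omega, by simp⟩
  | @splitEven _ i j hi hj hij _ =>
    exact .inr (.inr ⟨h, hh, by omega, i, j, hi, hj, by omega, by simp⟩)
  | @splitOdd _ i j hij hi hj =>
    exact .inr (.inr ⟨h, hh, by omega, i, j, by omega, by omega, by omega, by simp⟩)

lemma nimVal_add_eq (hs : HeapOption δ h s) (Y : Multiset ℕ) :
    nimVal (s + Y) = nimVal (h ::ₘ Y) ^^^ δ := by
  rw [nimVal_add, hs.nimVal_eq, nimVal_cons, Nat.xor_assoc, Nat.xor_comm δ, Nat.xor_assoc]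

end HeapOption

lemma exists_heapOption_of_xor_lt {δ h : ℕ} (hδ : heapVal h ^^^ δ < heapVal h) :
    ∃ s, HeapOption δ h s := by
  rcases heapVal_xor_lt_cases hδ with ⟨rfl, hval⟩ | ⟨rfl | rfl, hval⟩
  · exact ⟨_, .removeOneEven (by unfold heapVal at hval; omega) (by unfold heapVal at hval; omega)⟩
  · exact ⟨_, .removeTwo (by unfold heapVal at hval; omega)⟩
  · have hh : 3 ≤ h := by unfold heapVal at hval; omega
    rcases Nat.mod_two_eq_zero_or_one h with hpar | hpar
    · exact ⟨_, .splitOdd (i := 1) (j := h - 3) (by omega) (by omega) (by omega)⟩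
    · exact ⟨_, .removeOneOdd hh hpar⟩

lemma exists_heapOption_of_move {G G' : Multiset ℕ} (hm : Move026 G G') :
    ∃ δ h s Y, HeapOption δ h s ∧ G = h ::ₘ Y ∧ G' = s + Y := by
  suffices hopt : ∃ h ∈ G, ∃ δ s, HeapOption δ h s ∧ G' = s + G.erase h by
    obtain ⟨h, hh, δ, s, hs, rfl⟩ := hopt
    exact ⟨δ, h, s, G.erase h, hs, (Multiset.cons_erase hh).symm, rfl⟩
  rcases hm with ⟨h, hh, h2, rfl⟩ | ⟨h, hh, h3, rfl⟩ | ⟨h, hh, h4, i, j, hi, hj, hij, rfl⟩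
  · rcases Nat.mod_two_eq_zero_or_one h with hpar | hpar
    · exact ⟨h, hh, 1, _, .removeOneEven h2 hpar, by simp⟩
    · exact ⟨h, hh, 3, _, .removeOneOdd (by omega) hpar, by simp⟩
  · exact ⟨h, hh, 2, _, .removeTwo h3, by simp⟩
  · by_cases hpar : i % 2 = 0 ∨ j % 2 = 0
    · exact ⟨h, hh, 1, _, .splitEven hi hj (by omega) hpar, by simp⟩
    · exact ⟨h, hh, 3, _, .splitOdd (i := i) (j := j) (by omega) (by omega) (by omega), by simp⟩

lemma wellFounded_move : WellFounded (flip Move026) := by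
  refine Subrelation.wf (fun {G' G} hm => ?_) (measure Multiset.sum).wf
  obtain ⟨δ, h, s, Y, hs, rfl, rfl⟩ := exists_heapOption_of_move hm
  change (s + Y).sum < (h ::ₘ Y).sum
  rw [Multiset.sum_add, Multiset.sum_cons]
  exact Nat.add_lt_add_right hs.sum_lt _

lemma nimVal_ne_of_move {G G' : Multiset ℕ} (hm : Move026 G G') : nimVal G' ≠ nimVal G := by
  obtain ⟨δ, h, s, Y, hs, rfl, rfl⟩ := exists_heapOption_of_move hm
  rw [hs.nimVal_add_eq, ← Nat.xor_ne_zero_iff, Nat.xor_right_comm, Nat.xor_self, Nat.zero_xor]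
  exact hs.shift_ne_zero

lemma exists_move_nimVal_eq {G : Multiset ℕ} {m : ℕ} (hm : m < nimVal G) :
    ∃ G', Move026 G G' ∧ nimVal G' = m := by
  obtain ⟨h, hh, hlt⟩ := exists_mem_heapVal_xor_lt hm
  obtain ⟨s, hs⟩ := exists_heapOption_of_xor_lt hlt
  obtain ⟨Y, rfl⟩ := Multiset.exists_cons_of_mem hh
  exact ⟨s + Y, hs.move Y, by rw [hs.nimVal_add_eq, Nat.xor_xor_cancel_left]⟩

theorem nimVal_eq_mex (G : Multiset ℕ) :
    nimVal G = mex {m | ∃ G', Move026 G G' ∧ nimVal G' = m} := by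
  refine (mex_eq ?_ fun m hm => exists_move_nimVal_eq hm).symm
  rintro ⟨G', hm, hv⟩
  exact nimVal_ne_of_move hm hv

lemma exists_heapOption_xor_of_move {G G' : Multiset ℕ} (hm : Move026 G G') :
    ∃ h s Y, HeapOption (nimVal G ^^^ nimVal G') h s ∧ G = h ::ₘ Y ∧ G' = s + Y := by
  obtain ⟨δ, h, s, Y, hs, rfl, rfl⟩ := exists_heapOption_of_move hm
  refine ⟨h, s, Y, ?_, rfl, rfl⟩
  rwa [hs.nimVal_add_eq, Nat.xor_xor_cancel_left]

/-! ### Dominating heaps -/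

lemma t026_cases (k : ℕ) : (k ≤ 2 ∧ t026 k = 0) ∨ (3 ≤ k ∧ k ≤ 4 ∧ t026 k = 1) ∨
    (5 ≤ k ∧ 2 * t026 k + 5 ≤ k ∧ k ≤ 2 * t026 k + 6) := by
  unfold t026; split_ifs <;> omega

lemma w026_cases (k : ℕ) : (k ≤ 8 ∧ w026 k = 0) ∨ (9 ≤ k ∧ k ≤ 10 ∧ w026 k = 1) ∨
    (11 ≤ k ∧ k % 2 = 1 ∧ 2 * w026 k + 7 = k) ∨ (11 ≤ k ∧ k % 2 = 0 ∧ 2 * w026 k + 12 = k) := by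
  unfold w026; split_ifs <;> omega

lemma t026_eq_zero_iff {k : ℕ} : t026 k = 0 ↔ k ≤ 2 ∨ k = 5 ∨ k = 6 := by
  have := t026_cases k; omega

lemma t026_ne_zero_of_two_le_heapVal {h : ℕ} (hh : 2 ≤ heapVal h) : t026 h ≠ 0 := by
  rw [Ne, t026_eq_zero_iff]; unfold heapVal at hh; omega

lemma w026_eq_zero_of_t026_eq_zero {k : ℕ} (hk : t026 k = 0) : w026 k = 0 := by
  have := t026_cases k; have := w026_cases k; omega

-- `t` itself is not monotone: `t 4 = 1` and `t 5 = 0`.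
lemma w026_le_t026_sub_one {y k : ℕ} (hyk : y ≤ k) : w026 y ≤ t026 k - 1 := by
  have := t026_cases k; have := w026_cases y; omega

lemma tPos026_cons (h : ℕ) (Y : Multiset ℕ) : tPos026 (h ::ₘ Y) = t026 h + tPos026 Y := by
  simp [tPos026]

lemma tPos026_add (s Y : Multiset ℕ) : tPos026 (s + Y) = tPos026 s + tPos026 Y := by
  simp [tPos026]

lemma tPos026_singleton (h : ℕ) : tPos026 {h} = t026 h := by simp [tPos026]

lemma tPos026_pair (i j : ℕ) : tPos026 {i, j} = t026 i + t026 j := by simp [tPos026]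

lemma tPos026_eq_zero_iff {G : Multiset ℕ} : tPos026 G = 0 ↔ ∀ h ∈ G, t026 h = 0 := by
  rw [tPos026, Multiset.sum_eq_zero_iff, Multiset.forall_mem_map_iff]

lemma exists_mem_t026_ne_zero {G : Multiset ℕ} (hT : tPos026 G ≠ 0) : ∃ h ∈ G, t026 h ≠ 0 := by
  simpa [tPos026_eq_zero_iff] using hT

lemma t026_le_tPos026 {h : ℕ} {G : Multiset ℕ} (hh : h ∈ G) : t026 h ≤ tPos026 G :=
  Multiset.le_sum_of_mem (Multiset.mem_map_of_mem t026 hh)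

lemma w026_le_tPos026_sub_one {h : ℕ} {G : Multiset ℕ} (hh : h ∈ G) :
    w026 h ≤ tPos026 G - 1 :=
  (w026_le_t026_sub_one le_rfl).trans (Nat.sub_le_sub_right (t026_le_tPos026 hh) 1)

lemma nimVal_lt_two_of_tPos026_eq_zero {G : Multiset ℕ} (hT : tPos026 G = 0) : nimVal G < 2 := by
  by_contra! hv
  obtain ⟨h, hh, hval⟩ := exists_mem_two_le_heapVal hv
  exact t026_ne_zero_of_two_le_heapVal hval (tPos026_eq_zero_iff.1 hT h hh)

/-- Some heap `h` of `G` dominates the others with margin `d`, that is, `w h ≥ t (G - h) + d`.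
Adding `t h` on both sides avoids removing the heap. -/
def Dominated (d : ℕ) (G : Multiset ℕ) : Prop := ∃ h ∈ G, tPos026 G + d ≤ w026 h + t026 h

variable {d k : ℕ} {X : Multiset ℕ}

lemma dominated_cons (hk : tPos026 X + d ≤ w026 k) : Dominated d (k ::ₘ X) :=
  ⟨k, Multiset.mem_cons_self k X, by rw [tPos026_cons]; omega⟩

lemma dominated_cons_iff (hd : d ≠ 0) (hX : ∀ y ∈ X, y ≤ k) :
    Dominated d (k ::ₘ X) ↔ tPos026 X + d ≤ w026 k := by
  refine ⟨?_, dominated_cons⟩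
  rintro ⟨y, hy, hdom⟩
  rw [tPos026_cons] at hdom
  rcases Multiset.mem_cons.1 hy with rfl | hy
  · omega
  · have hle := t026_le_tPos026 hy
    have hlt := w026_le_t026_sub_one (hX y hy)
    omega

lemma Dominated.exists_le_w026 {G : Multiset ℕ} (hG : Dominated d G) : ∃ h ∈ G, d ≤ w026 h := by
  obtain ⟨h, hh, hdom⟩ := hG
  have := t026_le_tPos026 hh
  exact ⟨h, hh, by omega⟩

lemma Dominated.tPos026_ne_zero {G : Multiset ℕ} (hG : Dominated d G) (hd : d ≠ 0) :
    tPos026 G ≠ 0 := by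
  obtain ⟨h, hh, hdw⟩ := hG.exists_le_w026
  intro hT
  have := w026_eq_zero_of_t026_eq_zero (tPos026_eq_zero_iff.1 hT h hh)
  omega

/-! ### The predicted P-positions are not joined by moves -/

/-- The misère P-positions predicted by the theorem, with the Grundy value in closed form and no
reference to a largest heap. -/
def PredictedP (G : Multiset ℕ) : Prop :=
  (tPos026 G = 0 ∧ nimVal G = 1) ∨
  (tPos026 G ≠ 0 ∧ ¬ Dominated 1 G ∧ nimVal G = 0) ∨
  (tPos026 G ≠ 0 ∧ Dominated 2 G ∧ nimVal G = 2)

section NoMove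

variable {h : ℕ} {s Y : Multiset ℕ}

lemma HeapOption.tPos026_eq_zero_of_shift_one (hs : HeapOption 1 h s) (hh : t026 h = 0) :
    tPos026 s = 0 := by
  rw [t026_eq_zero_iff] at hh
  cases hs with
  | removeOneEven => rw [tPos026_singleton, t026_eq_zero_iff]; omega
  | splitEven => rw [tPos026_pair, Nat.add_eq_zero_iff, t026_eq_zero_iff, t026_eq_zero_iff]; omega

lemma HeapOption.w026_ne_zero_of_shift_one (hs : HeapOption 1 h s) (hT : tPos026 s = 0)
    (hh : t026 h ≠ 0) : w026 h ≠ 0 := by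
  rw [Ne, t026_eq_zero_iff] at hh
  have := w026_cases h
  cases hs with
  | removeOneEven => rw [tPos026_singleton, t026_eq_zero_iff] at hT; omega
  | splitEven =>
    rw [tPos026_pair, Nat.add_eq_zero_iff, t026_eq_zero_iff, t026_eq_zero_iff] at hT; omega

lemma HeapOption.w026_eq_zero_of_shift_three (hs : HeapOption 3 h s) (hT : tPos026 s = 0) :
    w026 h = 0 := by
  have := w026_cases h
  cases hs with
  | removeOneOdd => rw [tPos026_singleton, t026_eq_zero_iff] at hT; omega
  | splitOdd =>
    rw [tPos026_pair, Nat.add_eq_zero_iff, t026_eq_zero_iff, t026_eq_zero_iff] at hT; omega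

-- Removing two beans shifts `t` and `w` of the heap by at most one each.
lemma HeapOption.dominated_of_shift_two (hs : HeapOption 2 h s) (hdom : Dominated (d + 1) (s + Y)) :
    Dominated d (h ::ₘ Y) := by
  cases hs with | removeTwo hh
  have := t026_cases h; have := t026_cases (h - 2); have := w026_cases h; have := w026_cases (h - 2)
  rw [Multiset.singleton_add] at hdom
  obtain ⟨y, hy, hdom⟩ := hdom
  rw [tPos026_cons] at hdom
  rcases Multiset.mem_cons.1 hy with rfl | hy
  · exact dominated_cons (by omega)
  · exact ⟨y, Multiset.mem_cons_of_mem hy, by rw [tPos026_cons]; omega⟩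

lemma HeapOption.dominated_add_of_shift_two (hs : HeapOption 2 h s)
    (hdom : Dominated (d + 1) (h ::ₘ Y)) : Dominated d (s + Y) := by
  cases hs with | removeTwo hh
  have := t026_cases h; have := t026_cases (h - 2); have := w026_cases h; have := w026_cases (h - 2)
  rw [Multiset.singleton_add]
  obtain ⟨y, hy, hdom⟩ := hdom
  rw [tPos026_cons] at hdom
  rcases Multiset.mem_cons.1 hy with rfl | hy
  · exact dominated_cons (by omega)
  · exact ⟨y, Multiset.mem_cons_of_mem hy, by rw [tPos026_cons]; omega⟩

lemma HeapOption.dominated_one_of_shift_one (hs : HeapOption 1 h s)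
    (hT : tPos026 (h ::ₘ Y) ≠ 0) (hT' : tPos026 (s + Y) = 0) : Dominated 1 (h ::ₘ Y) := by
  rw [tPos026_cons] at hT
  rw [tPos026_add] at hT'
  have hw := hs.w026_ne_zero_of_shift_one (by omega) (by omega)
  exact dominated_cons (by omega)

lemma HeapOption.tPos026_ne_zero_of_shift_three (hs : HeapOption 3 h s)
    (hdom : Dominated 2 (h ::ₘ Y)) : tPos026 (s + Y) ≠ 0 := by
  intro hT
  rw [tPos026_add, Nat.add_eq_zero_iff] at hT
  obtain ⟨y, hy, hw⟩ := hdom.exists_le_w026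
  rcases Multiset.mem_cons.1 hy with rfl | hy
  · have := hs.w026_eq_zero_of_shift_three hT.1
    omega
  · have := w026_eq_zero_of_t026_eq_zero (tPos026_eq_zero_iff.1 hT.2 y hy)
    omega

lemma HeapOption.not_dominated_of_tPos026_eq_zero {δ : ℕ} (hs : HeapOption δ h s) (hd : d ≠ 0)
    (hT : tPos026 (h ::ₘ Y) = 0) : ¬ Dominated d (s + Y) := by
  intro hdom
  obtain ⟨y, hy, hw⟩ := hdom.exists_le_w026
  have hle : y ≤ 6 := by
    simp only [tPos026_eq_zero_iff, Multiset.forall_mem_cons, t026_eq_zero_iff] at hT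
    rcases Multiset.mem_add.1 hy with hy | hy
    · have := hs.lt_of_mem hy
      omega
    · have := hT.2 y hy
      omega
  have := w026_cases y
  omega

theorem not_predictedP_of_move {G G' : Multiset ℕ} (hG : PredictedP G) (hm : Move026 G G') :
    ¬ PredictedP G' := by
  intro hG'
  have hne := nimVal_ne_of_move hm
  obtain ⟨h, s, Y, hs, rfl, rfl⟩ := exists_heapOption_xor_of_move hm
  rcases hG with ⟨hT, hv⟩ | ⟨hT, hdom, hv⟩ | ⟨hT, hdom, hv⟩ <;>
    rcases hG' with ⟨hT', hv'⟩ | ⟨hT', hdom', hv'⟩ | ⟨hT', hdom', hv'⟩ <;>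
    rw [hv, hv'] at hs hne
  · exact hne rfl
  · rw [tPos026_cons, Nat.add_eq_zero_iff] at hT
    exact hT' (by rw [tPos026_add, hs.tPos026_eq_zero_of_shift_one hT.1, hT.2])
  · exact hs.not_dominated_of_tPos026_eq_zero two_ne_zero hT hdom'
  · exact hdom (hs.dominated_one_of_shift_one hT hT')
  · exact hne rfl
  · exact hdom (hs.dominated_of_shift_two hdom')
  · exact hs.tPos026_ne_zero_of_shift_three hdom hT'
  · exact hdom' (hs.dominated_add_of_shift_two hdom)
  · exact hne rfl

lemma exists_move_of_predictedP {G : Multiset ℕ} (hG : PredictedP G) : ∃ G', Move026 G G' := by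
  by_cases hT : tPos026 G = 0
  · have hv : nimVal G = 1 := by
      rcases hG with hG | hG | hG
      exacts [hG.2, absurd hT hG.1, absurd hT hG.1]
    obtain ⟨G', hm, -⟩ := exists_move_nimVal_eq (hv ▸ Nat.zero_lt_one)
    exact ⟨G', hm⟩
  · obtain ⟨h, hh, hth⟩ := exists_mem_t026_ne_zero hT
    obtain ⟨Y, rfl⟩ := Multiset.exists_cons_of_mem hh
    rw [Ne, t026_eq_zero_iff] at hth
    exact ⟨_, (HeapOption.removeTwo (by omega)).move Y⟩

end NoMove

/-! ### Winning moves from the other positions -/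

/-- Some move from `G` reaches a predicted P-position. -/
def HasWinningMove (G : Multiset ℕ) : Prop := ∃ G', Move026 G G' ∧ PredictedP G'

section Targets

variable {δ h : ℕ} {s Y : Multiset ℕ}

lemma not_dominated_one_add (hs : ∀ i ∈ s, w026 i + t026 i ≤ tPos026 s + tPos026 Y)
    (hY : ∀ y ∈ Y, w026 y ≤ tPos026 s) : ¬ Dominated 1 (s + Y) := by
  rintro ⟨y, hy, hdom⟩
  rw [tPos026_add] at hdom
  rcases Multiset.mem_add.1 hy with hy | hy
  · have := hs y hy
    omega
  · have := hY y hy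
    have := t026_le_tPos026 hy
    omega

lemma HeapOption.hasWinningMove_of_tPos026_eq_zero (hs : HeapOption δ h s)
    (hv : nimVal (h ::ₘ Y) = δ ^^^ 1) (hsT : tPos026 s = 0) (hYT : tPos026 Y = 0) :
    HasWinningMove (h ::ₘ Y) := by
  refine ⟨s + Y, hs.move Y, .inl ⟨by rw [tPos026_add, hsT, hYT], ?_⟩⟩
  rw [hs.nimVal_add_eq, hv, Nat.xor_comm, Nat.xor_xor_cancel_left]

lemma HeapOption.hasWinningMove_of_not_dominated (hs : HeapOption δ h s)
    (hv : nimVal (h ::ₘ Y) = δ) (hT : tPos026 s + tPos026 Y ≠ 0) (hdom : ¬ Dominated 1 (s + Y)) :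
    HasWinningMove (h ::ₘ Y) := by
  refine ⟨s + Y, hs.move Y, .inr (.inl ⟨by rwa [tPos026_add], hdom, ?_⟩)⟩
  rw [hs.nimVal_add_eq, hv, Nat.xor_self]

lemma HeapOption.hasWinningMove_of_singleton {a : ℕ} (hs : HeapOption δ h {a})
    (hv : nimVal (h ::ₘ Y) = δ) (ha : t026 a ≠ 0) (haw : w026 a ≤ tPos026 Y)
    (hY : ∀ y ∈ Y, w026 y ≤ t026 a) : HasWinningMove (h ::ₘ Y) := by
  refine hs.hasWinningMove_of_not_dominated hv ?_ (not_dominated_one_add ?_ ?_) <;>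
    simp only [tPos026_singleton, Multiset.mem_singleton, forall_eq]
  · omega
  · omega
  · exact hY

lemma HeapOption.hasWinningMove_of_pair {i j : ℕ} (hs : HeapOption δ h {i, j})
    (hv : nimVal (h ::ₘ Y) = δ) (hij : t026 i + t026 j ≠ 0) (hi : w026 i ≤ t026 j + tPos026 Y)
    (hj : w026 j ≤ t026 i + tPos026 Y) (hY : ∀ y ∈ Y, w026 y ≤ t026 i + t026 j) :
    HasWinningMove (h ::ₘ Y) := by
  refine hs.hasWinningMove_of_not_dominated hv ?_ (not_dominated_one_add ?_ ?_) <;>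
    rw [tPos026_pair]
  · omega
  · simp only [Multiset.insert_eq_cons, Multiset.forall_mem_cons, Multiset.mem_singleton, forall_eq]
    omega
  · exact hY

lemma HeapOption.hasWinningMove_of_dominated (hs : HeapOption δ h s)
    (hv : nimVal (h ::ₘ Y) = δ ^^^ 2) (hdom : Dominated 2 (s + Y)) :
    HasWinningMove (h ::ₘ Y) := by
  refine ⟨s + Y, hs.move Y, .inr (.inr ⟨hdom.tPos026_ne_zero two_ne_zero, hdom, ?_⟩)⟩
  rw [hs.nimVal_add_eq, hv, Nat.xor_comm, Nat.xor_xor_cancel_left]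

end Targets

lemma hasWinningMove_of_tPos026_eq_zero (hk : 2 ≤ k) (hT : tPos026 (k ::ₘ X) = 0)
    (hv : nimVal (k ::ₘ X) = 0) : HasWinningMove (k ::ₘ X) := by
  rw [tPos026_cons, Nat.add_eq_zero_iff, t026_eq_zero_iff] at hT
  obtain ⟨hkT, hXT⟩ := hT
  suffices hopt : ∃ s, HeapOption 1 k s ∧ tPos026 s = 0 by
    obtain ⟨s, hs, hsT⟩ := hopt
    exact hs.hasWinningMove_of_tPos026_eq_zero hv hsT hXT
  obtain rfl | rfl | rfl : k = 2 ∨ k = 5 ∨ k = 6 := by omega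
  · exact ⟨{1}, .removeOneEven (by norm_num) rfl, rfl⟩
  · exact ⟨{1, 2}, .splitEven (by norm_num) (by norm_num) rfl (.inr rfl), rfl⟩
  · exact ⟨{5}, .removeOneEven (by norm_num) rfl, rfl⟩

section EvenHeap

variable {h : ℕ} {Y : Multiset ℕ}

lemma t026_sub_one_of_even (hh : h % 2 = 0) : t026 (h - 1) = t026 h := by
  have := t026_cases h; have := t026_cases (h - 1); omega

lemma not_dominated_one_sub_one_cons (hh : h % 2 = 0) (hdom : ¬ Dominated 1 (h ::ₘ Y))
    (hw : w026 (h - 1) ≤ tPos026 Y) : ¬ Dominated 1 ((h - 1) ::ₘ Y) := by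
  have ht := t026_sub_one_of_even hh
  rintro ⟨y, hy, hdom'⟩
  rw [tPos026_cons] at hdom'
  rcases Multiset.mem_cons.1 hy with rfl | hy
  · omega
  · exact hdom ⟨y, Multiset.mem_cons_of_mem hy, by rw [tPos026_cons]; omega⟩

lemma hasWinningMove_of_not_dominated_one {G : Multiset ℕ} (hT : tPos026 G ≠ 0)
    (hdom : ¬ Dominated 1 G) (hv : nimVal G = 1) : HasWinningMove G := by
  obtain ⟨h, hh, hval⟩ := exists_mem_odd_heapVal hv
  obtain ⟨Y, rfl⟩ := Multiset.exists_cons_of_mem hh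
  have h2 : 2 ≤ h ∧ h % 2 = 0 := by unfold heapVal at hval; omega
  rw [tPos026_cons] at hT
  by_cases hw : w026 (h - 1) ≤ tPos026 Y
  · refine (HeapOption.removeOneEven h2.1 h2.2).hasWinningMove_of_not_dominated hv ?_ ?_
    · rwa [tPos026_singleton, t026_sub_one_of_even h2.2]
    · exact Multiset.singleton_add _ Y ▸ not_dominated_one_sub_one_cons h2.2 hdom hw
  · have hwh : w026 h ≤ tPos026 Y := not_lt.1 fun hlt => hdom (dominated_cons hlt)
    have := w026_cases h; have := w026_cases (h - 1); have := w026_cases (h - 4)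
    have := t026_cases (h - 4); have := t026_cases 2; have := w026_cases 2
    have hs : HeapOption 1 h {2, h - 4} :=
      .splitEven (by norm_num) (by omega) (by omega) (.inl rfl)
    refine hs.hasWinningMove_of_pair hv (by omega) (by omega) (by omega) fun y hy => ?_
    have := w026_le_tPos026_sub_one hy
    omega

end EvenHeap

lemma exists_heapOption_tPos026_eq_zero {δ h : ℕ} (hh : 2 ≤ heapVal h) (h8 : h ≤ 8)
    (hδ : δ = 2 ∨ δ = 3) : ∃ s, HeapOption δ h s ∧ tPos026 s = 0 := by
  obtain rfl | rfl | rfl | rfl : h = 3 ∨ h = 4 ∨ h = 7 ∨ h = 8 := by unfold heapVal at hh; omega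
  all_goals rcases hδ with rfl | rfl
  · exact ⟨{1}, .removeTwo (by norm_num), rfl⟩
  · exact ⟨{2}, .removeOneOdd (by norm_num) rfl, rfl⟩
  · exact ⟨{2}, .removeTwo (by norm_num), rfl⟩
  · exact ⟨{1, 1}, .splitOdd rfl rfl rfl, rfl⟩
  · exact ⟨{5}, .removeTwo (by norm_num), rfl⟩
  · exact ⟨{6}, .removeOneOdd (by norm_num) rfl, rfl⟩
  · exact ⟨{6}, .removeTwo (by norm_num), rfl⟩
  · exact ⟨{1, 5}, .splitOdd rfl rfl rfl, rfl⟩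

lemma not_dominated_one_of_le_eight {G : Multiset ℕ} (hG : ∀ h ∈ G, h ≤ 8) : ¬ Dominated 1 G := by
  intro hdom
  obtain ⟨h, hh, hw⟩ := hdom.exists_le_w026
  have := hG h hh
  have := w026_cases h
  omega

lemma hasWinningMove_of_le_eight {G : Multiset ℕ} (hG : ∀ h ∈ G, h ≤ 8) (hv : 2 ≤ nimVal G) :
    HasWinningMove G := by
  have hv4 := nimVal_lt_four G
  obtain ⟨h, hh, hval⟩ := exists_mem_two_le_heapVal hv
  obtain ⟨Y, rfl⟩ := Multiset.exists_cons_of_mem hh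
  have option {δ : ℕ} := exists_heapOption_tPos026_eq_zero (δ := δ) hval (hG h hh)
  rw [Multiset.forall_mem_cons] at hG
  by_cases hYT : tPos026 Y = 0
  · obtain hv | hv : nimVal (h ::ₘ Y) = 2 ∨ nimVal (h ::ₘ Y) = 3 := by omega
    · obtain ⟨s, hs, hsT⟩ := option (.inr rfl)
      exact hs.hasWinningMove_of_tPos026_eq_zero hv hsT hYT
    · obtain ⟨s, hs, hsT⟩ := option (.inl rfl)
      exact hs.hasWinningMove_of_tPos026_eq_zero hv hsT hYT
  · obtain ⟨s, hs, hsT⟩ := option (δ := nimVal (h ::ₘ Y)) (by omega)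
    refine hs.hasWinningMove_of_not_dominated rfl (by omega) (not_dominated_one_of_le_eight ?_)
    intro i hi
    rcases Multiset.mem_add.1 hi with hi | hi
    · exact (hs.lt_of_mem hi).le.trans hG.1
    · exact hG.2 i hi

lemma hasWinningMove_two_of_le (hX : ∀ y ∈ X, y ≤ k) (hk : 9 ≤ k)
    (hw : w026 k ≤ tPos026 X + 1) (hv : nimVal (k ::ₘ X) = 2) : HasWinningMove (k ::ₘ X) := by
  -- Here removing two beans would leave the heap `10`, which dominates.
  by_cases hspecial : k = 12 ∧ tPos026 X = 0
  · obtain ⟨rfl, hXT⟩ := hspecial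
    have hs : HeapOption 3 12 {5, 5} := .splitOdd rfl rfl rfl
    exact hs.hasWinningMove_of_tPos026_eq_zero hv rfl hXT
  · have := w026_cases k; have := w026_cases (k - 2)
    have := t026_cases k; have := t026_cases (k - 2)
    refine (HeapOption.removeTwo (by omega)).hasWinningMove_of_singleton hv
      (by omega) (by omega) fun y hy => ?_
    have := w026_le_t026_sub_one (hX y hy)
    omega

lemma hasWinningMove_three_of_odd (hX : ∀ y ∈ X, y ≤ k) (hk : 9 ≤ k) (hodd : k % 2 = 1)
    (hw : w026 k ≤ tPos026 X + 3) (h11 : k = 11 → tPos026 X ≠ 0) (hv : nimVal (k ::ₘ X) = 3) :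
    HasWinningMove (k ::ₘ X) := by
  have := w026_cases k; have := w026_cases (k - 1)
  have := t026_cases k; have := t026_cases (k - 1)
  refine (HeapOption.removeOneOdd (by omega) hodd).hasWinningMove_of_singleton hv
    (by omega) (by omega) fun y hy => ?_
  have := w026_le_t026_sub_one (hX y hy)
  omega

lemma hasWinningMove_three_of_even (hX : ∀ y ∈ X, y ≤ k) (hk : 9 ≤ k)
    (heven : k % 2 = 0) (hw : w026 k ≤ tPos026 X + 1) (hv : nimVal (k ::ₘ X) = 3) :
    HasWinningMove (k ::ₘ X) := by
  have := w026_cases k; have := t026_cases k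
  have := t026_cases 3; have := w026_cases 3
  have := t026_cases (k - 5); have := w026_cases (k - 5)
  have hs : HeapOption 3 k {3, k - 5} := .splitOdd (by omega) rfl (by omega)
  refine hs.hasWinningMove_of_pair hv (by omega) (by omega) (by omega) fun y hy => ?_
  have := w026_le_t026_sub_one (hX y hy)
  omega

lemma hasWinningMove_of_le (hX : ∀ y ∈ X, y ≤ k) (hw : w026 k ≤ tPos026 X + 1)
    (hv : 2 ≤ nimVal (k ::ₘ X)) : HasWinningMove (k ::ₘ X) := by
  have hv4 := nimVal_lt_four (k ::ₘ X)
  rcases le_or_gt k 8 with hk | hk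
  · exact hasWinningMove_of_le_eight
      (Multiset.forall_mem_cons.2 ⟨hk, fun y hy => (hX y hy).trans hk⟩) hv
  obtain hv | hv : nimVal (k ::ₘ X) = 2 ∨ nimVal (k ::ₘ X) = 3 := by omega
  · exact hasWinningMove_two_of_le hX hk hw hv
  rcases Nat.mod_two_eq_zero_or_one k with hpar | hpar
  · exact hasWinningMove_three_of_even hX hk hpar hw hv
  · have := w026_cases k
    exact hasWinningMove_three_of_odd hX hk hpar (by omega) (by omega) hv

lemma hasWinningMove_zero_of_alone (hT : tPos026 X = 0) (hw : w026 k ≠ 0)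
    (hv : nimVal (k ::ₘ X) = 0) : HasWinningMove (k ::ₘ X) := by
  have := w026_cases k
  have hval : heapVal k < 2 := by
    rw [nimVal_cons, Nat.xor_eq_zero_iff] at hv
    exact hv ▸ nimVal_lt_two_of_tPos026_eq_zero hT
  unfold heapVal at hval
  have to_zero {i j : ℕ} (hs : HeapOption 1 k {i, j}) (hij : tPos026 {i, j} = 0) :
      HasWinningMove (k ::ₘ X) := hs.hasWinningMove_of_tPos026_eq_zero hv hij hT
  by_cases h9 : k = 9
  · exact to_zero (i := 1) (j := 6) (.splitEven (by omega) (by omega) (by omega) (.inr rfl)) rfl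
  by_cases h10 : k = 10
  · exact to_zero (i := 2) (j := 6) (.splitEven (by omega) (by omega) (by omega) (.inr rfl)) rfl
  by_cases h14 : k = 14
  · exact to_zero (i := 6) (j := 6) (.splitEven (by omega) (by omega) (by omega) (.inr rfl)) rfl
  have := w026_cases (k - 2)
  exact (HeapOption.removeTwo (by omega)).hasWinningMove_of_dominated hv
    (dominated_cons (by omega))

lemma hasWinningMove_zero_of_lt (hw : tPos026 X < w026 k) (hv : nimVal (k ::ₘ X) = 0) :
    HasWinningMove (k ::ₘ X) := by
  by_cases hT : tPos026 X = 0
  · exact hasWinningMove_zero_of_alone hT (by omega) hv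
  obtain ⟨y, hy, hyt⟩ := exists_mem_t026_ne_zero hT
  obtain ⟨Z, rfl⟩ := Multiset.exists_cons_of_mem hy
  rw [Multiset.cons_swap] at hv ⊢
  rw [tPos026_cons] at hw
  have := t026_cases y; have := t026_cases (y - 2)
  refine (HeapOption.removeTwo (by omega)).hasWinningMove_of_dominated hv ?_
  rw [Multiset.add_cons, Multiset.singleton_add]
  exact dominated_cons (by rw [tPos026_cons]; omega)

lemma hasWinningMove_one_of_eq (hw : w026 k = tPos026 X + 1) (hv : nimVal (k ::ₘ X) = 1) :
    HasWinningMove (k ::ₘ X) := by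
  have := w026_cases k; have := w026_cases (k - 6); have := t026_cases (k - 6)
  have := w026_cases 4; have := t026_cases 4
  have hs : HeapOption 1 k {4, k - 6} :=
    .splitEven (by norm_num) (by omega) (by omega) (.inl rfl)
  refine hs.hasWinningMove_of_pair hv (by omega) (by omega) (by omega) fun y hy => ?_
  have := w026_le_tPos026_sub_one hy
  omega

lemma hasWinningMove_one_of_odd (hodd : k % 2 = 1) (hw : tPos026 X + 2 ≤ w026 k)
    (hv : nimVal (k ::ₘ X) = 1) : HasWinningMove (k ::ₘ X) := by
  have := w026_cases k
  -- The general split into two nearly equal heaps would be `{5, 6}` here, with `t = 0`.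
  by_cases h13 : k = 13
  · have := w026_cases 4; have := t026_cases 4; have := w026_cases 7; have := t026_cases 7
    have hs : HeapOption 1 k {4, 7} :=
      .splitEven (by norm_num) (by norm_num) (by omega) (.inl rfl)
    refine hs.hasWinningMove_of_pair hv (by omega) (by omega) (by omega) fun y hy => ?_
    have := w026_le_tPos026_sub_one hy
    omega
  · obtain ⟨i, rfl⟩ : ∃ i, k = 2 * i + 3 := ⟨(k - 3) / 2, by omega⟩
    have := w026_cases i; have := t026_cases i
    have := w026_cases (i + 1); have := t026_cases (i + 1)
    have hs : HeapOption 1 (2 * i + 3) {i, i + 1} :=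
      .splitEven (by omega) (by omega) (by omega) (by omega)
    refine hs.hasWinningMove_of_pair hv (by omega) (by omega) (by omega) fun y hy => ?_
    have := w026_le_tPos026_sub_one hy
    omega

lemma hasWinningMove_one_of_even (heven : k % 2 = 0) (hw : tPos026 X + 2 ≤ w026 k)
    (hv : nimVal (k ::ₘ X) = 1) : HasWinningMove (k ::ₘ X) := by
  have := w026_cases k; have := w026_cases (k - 3); have := t026_cases 1
  have hs : HeapOption 3 k {k - 3, 1} := .splitOdd (by omega) (by omega) rfl
  refine hs.hasWinningMove_of_dominated hv ?_
  rw [Multiset.insert_eq_cons, Multiset.cons_add, Multiset.singleton_add]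
  exact dominated_cons (by rw [tPos026_cons]; omega)

lemma hasWinningMove_one_of_lt (hw : tPos026 X < w026 k) (hv : nimVal (k ::ₘ X) = 1) :
    HasWinningMove (k ::ₘ X) := by
  rcases Nat.eq_or_lt_of_le hw with hw | hw
  · exact hasWinningMove_one_of_eq hw.symm hv
  rcases Nat.mod_two_eq_zero_or_one k with hpar | hpar
  · exact hasWinningMove_one_of_even hpar hw hv
  · exact hasWinningMove_one_of_odd hpar hw hv

lemma hasWinningMove_three_eleven (hT : tPos026 X = 0) (hv : nimVal (11 ::ₘ X) = 3) :
    HasWinningMove (11 ::ₘ X) := by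
  have hvX : nimVal X = 1 := by
    rw [nimVal_cons] at hv
    rw [← Nat.xor_xor_cancel_left (heapVal 11) (nimVal X), hv]
    rfl
  obtain ⟨y, hy, hval⟩ := exists_mem_odd_heapVal hvX
  obtain ⟨Z, rfl⟩ := Multiset.exists_cons_of_mem hy
  have hy2 : 2 ≤ y ∧ y % 2 = 0 := by unfold heapVal at hval; omega
  rw [Multiset.cons_swap] at hv ⊢
  rw [tPos026_cons, ← t026_sub_one_of_even hy2.2, ← tPos026_cons] at hT
  refine (HeapOption.removeOneEven hy2.1 hy2.2).hasWinningMove_of_dominated hv ?_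
  rw [Multiset.add_cons, Multiset.singleton_add]
  exact dominated_cons (by rw [hT]; rfl)

lemma hasWinningMove_three_of_dominated (hX : ∀ y ∈ X, y ≤ k) (hw : tPos026 X + 2 ≤ w026 k)
    (hv : nimVal (k ::ₘ X) = 3) : HasWinningMove (k ::ₘ X) := by
  have := w026_cases k
  rcases Nat.mod_two_eq_zero_or_one k with hpar | hpar
  · have := w026_cases (k - 1)
    exact (HeapOption.removeOneEven (by omega) hpar).hasWinningMove_of_dominated hv
      (dominated_cons (by omega))
  by_cases h11 : k = 11
  · subst h11
    exact hasWinningMove_three_eleven (by omega) hv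
  by_cases hfar : tPos026 X + 4 ≤ w026 k
  · have := w026_cases (k - 4); have := t026_cases 2
    have hs : HeapOption 1 k {k - 4, 2} :=
      .splitEven (by omega) (by norm_num) (by omega) (.inr rfl)
    refine hs.hasWinningMove_of_dominated hv ?_
    rw [Multiset.insert_eq_cons, Multiset.cons_add, Multiset.singleton_add]
    exact dominated_cons (by rw [tPos026_cons]; omega)
  · exact hasWinningMove_three_of_odd hX (by omega) hpar (by omega) (by omega) hv

theorem hasWinningMove_of_not_predictedP (hX : ∀ y ∈ X, y ≤ k) (hk : 2 ≤ k)
    (hn : ¬ PredictedP (k ::ₘ X)) : HasWinningMove (k ::ₘ X) := by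
  have hv4 := nimVal_lt_four (k ::ₘ X)
  have dominated_one_iff := dominated_cons_iff one_ne_zero hX
  have dominated_two_iff := dominated_cons_iff two_ne_zero hX
  simp only [PredictedP, not_or, not_and] at hn
  obtain ⟨hn1, hn0, hn2⟩ := hn
  by_cases hT : tPos026 (k ::ₘ X) = 0
  · have := nimVal_lt_two_of_tPos026_eq_zero hT
    have := hn1 hT
    exact hasWinningMove_of_tPos026_eq_zero hk hT (by omega)
  by_cases hdom : tPos026 X < w026 k
  · obtain hv | hv | hv | hv : nimVal (k ::ₘ X) = 0 ∨ nimVal (k ::ₘ X) = 1 ∨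
        nimVal (k ::ₘ X) = 2 ∨ nimVal (k ::ₘ X) = 3 := by omega
    · exact hasWinningMove_zero_of_lt hdom hv
    · exact hasWinningMove_one_of_lt hdom hv
    · have hw : ¬ tPos026 X + 2 ≤ w026 k := fun hw => hn2 hT (dominated_two_iff.2 hw) hv
      exact hasWinningMove_of_le hX (by omega) hv.ge
    · rcases Nat.eq_or_lt_of_le hdom with hw | hw
      · exact hasWinningMove_of_le hX hw.ge (by omega)
      · exact hasWinningMove_three_of_dominated hX hw hv
  · have hndom : ¬ Dominated 1 (k ::ₘ X) := fun h => hdom (dominated_one_iff.1 h)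
    have hv0 := hn0 hT hndom
    obtain hv | hv : nimVal (k ::ₘ X) = 1 ∨ 2 ≤ nimVal (k ::ₘ X) := by omega
    · exact hasWinningMove_of_not_dominated_one hT hndom hv
    · exact hasWinningMove_of_le hX (by omega) hv

lemma exists_eq_cons_of_move {G G' : Multiset ℕ} (hm : Move026 G G') :
    ∃ k X, G = k ::ₘ X ∧ 2 ≤ k ∧ ∀ y ∈ X, y ≤ k := by
  obtain ⟨δ, h, s, Y, hs, rfl, rfl⟩ := exists_heapOption_of_move hm
  have hh : 2 ≤ h := by cases hs <;> omega
  obtain ⟨k, hk, hmax⟩ := (h ::ₘ Y).toFinset.exists_max_image id ⟨h, by simp⟩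
  simp only [Multiset.mem_toFinset, id_eq] at hk hmax
  obtain ⟨X, hX⟩ := Multiset.exists_cons_of_mem hk
  refine ⟨k, X, hX, hh.trans (hmax h (Multiset.mem_cons_self h Y)), fun y hy => hmax y ?_⟩
  exact hX ▸ Multiset.mem_cons_of_mem hy

theorem predictedP_iff_forall_move (G : Multiset ℕ) :
    PredictedP G ↔ (∃ G', Move026 G G') ∧ ∀ G', Move026 G G' → ¬ PredictedP G' := by
  refine ⟨fun hG => ⟨exists_move_of_predictedP hG, fun G' => not_predictedP_of_move hG⟩, ?_⟩
  rintro ⟨⟨G', hm⟩, hopt⟩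
  obtain ⟨k, X, rfl, hk, hX⟩ := exists_eq_cons_of_move hm
  by_contra hn
  obtain ⟨G'', hm', hP⟩ := hasWinningMove_of_not_predictedP hX hk hn
  exact hopt G'' hm' hP

end Octal026

/-- Allemang's characterization of the misère P-positions of 0.26.  Here `PP` is
the misère P-position predicate (characterized recursively: a position is a
P-position iff it has at least one option and every option is an N-position),
and `g` is the normal-play Grundy function (characterized by the mex recursion).
`G` is a nonempty position with all heaps positive, `k` is a heap of maximal
size in `G`, and `X = G.erase k`. -/
theorem ppos026_characterization
    (g : Multiset ℕ → ℕ)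
    (hg : ∀ G : Multiset ℕ, g G = mex {m | ∃ G', Move026 G G' ∧ g G' = m})
    (PP : Multiset ℕ → Prop)
    (hPP : ∀ G : Multiset ℕ,
      PP G ↔ ((∃ G', Move026 G G') ∧ ∀ G', Move026 G G' → ¬ PP G'))
    (G : Multiset ℕ) (hpos : ∀ j ∈ G, 1 ≤ j)
    (k : ℕ) (hk : k ∈ G) (hmax : ∀ j ∈ G, j ≤ k) :
    PP G ↔
      (tPos026 G = 0 ∧ g G = 1) ∨
      (tPos026 G ≠ 0 ∧ w026 k ≤ tPos026 (G.erase k) ∧ g G = 0) ∨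
      (tPos026 G ≠ 0 ∧ tPos026 (G.erase k) + 2 ≤ w026 k ∧ g G = 2) := by
  obtain ⟨X, rfl⟩ := Multiset.exists_cons_of_mem hk
  have hX : ∀ y ∈ X, y ≤ k := fun y hy => hmax y (Multiset.mem_cons_of_mem hy)
  open Octal026 in
  rw [iff_of_misere_rec wellFounded_move hPP predictedP_iff_forall_move,
    eq_of_mex_rec wellFounded_move hg nimVal_eq_mex, Multiset.erase_cons_head, PredictedP,
    dominated_cons_iff one_ne_zero hX, dominated_cons_iff two_ne_zero hX, not_le,
    Order.lt_add_one_iff]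
end

section
/- The bipartite monoid (Q, P) associated to the game 0.26 is reduced: for all x ≠ y in Q there exists z ∈ Q such that exactly one of x·z ∈ P, y·z ∈ P holds. -/
/-- Generators of the misère quotient of 0.26: `a`, `b`, and `c n` for `n : ℕ`. -/
inductive Gen026 where
  | a : Gen026
  | b : Gen026
  | c : ℕ → Gen026

/-- The free commutative monoid on the generators, written multiplicatively. -/
abbrev FM026 := Multiplicative (Multiset Gen026)

/-- The generator `x` as an element of the free commutative monoid. -/
def fgen026 (x : Gen026) : FM026 := Multiplicative.ofAdd {x}

def fa : FM026 := fgen026 .a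
def fb : FM026 := fgen026 .b
def fc (n : ℕ) : FM026 := fgen026 (.c n)

/-- The defining relations of the quotient `Q`:
`a² = 1`, `b^(n+1) c_n = b^(2n+3)`, and `c_m c_n = b^(m+2) c_n` for `m ≤ n`. -/
def rel026 : FM026 → FM026 → Prop := fun x y =>
  (x = fa ^ 2 ∧ y = 1) ∨
  (∃ n : ℕ, x = fb ^ (n + 1) * fc n ∧ y = fb ^ (2 * n + 3)) ∨
  (∃ m n : ℕ, m ≤ n ∧ x = fc m * fc n ∧ y = fb ^ (m + 2) * fc n)

/-- The commutative monoid `Q` presented by generators `a`, `b`, `c_n` and the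
relations `rel026`. -/
def Q026 : Type := (conGen rel026).Quotient

instance : CommMonoid Q026 := Con.commMonoid _

/-- The image of `a` in `Q`. -/
def qa : Q026 := (conGen rel026).mk' fa
/-- The image of `b` in `Q`. -/
def qb : Q026 := (conGen rel026).mk' fb
/-- The image of `c_n` in `Q`. -/
def qc (n : ℕ) : Q026 := (conGen rel026).mk' (fc n)

/-- The P-portion `P = {a} ∪ {b^(2m) : m ≥ 1} ∪ {b^m c_n : m ≤ n, m + n odd}`. -/
def P026 : Set Q026 :=
  {x | x = qa} ∪
  {x | ∃ m : ℕ, 1 ≤ m ∧ x = qb ^ (2 * m)} ∪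
  {x | ∃ m n : ℕ, m ≤ n ∧ (m + n) % 2 = 1 ∧ x = qb ^ m * qc n}

/-- The pretending function on single heaps. -/
noncomputable def phi026 (k : ℕ) : Q026 :=
  if k ≤ 8 then
    (if k % 4 = 1 then 1 else if k % 4 = 2 then qa
     else if k % 4 = 3 then qb else qa * qb)
  else if k = 9 then qc 0
  else if k = 10 then qa * qc 0
  else if k % 2 = 1 then qc ((k - 9) / 2)
  else qa * qb * qc ((k - 12) / 2)

/-- The pretending function extended multiplicatively to positions. -/
noncomputable def Phi026 (G : Multiset ℕ) : Q026 := (G.map phi026).prod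

/-!
The sign of an element of `Q` records its number of factors `a` mod `2`. Its weight `w` is
additive, with `b` of weight `1` and `c_n` of weight `n + 2`, and its level `u` is the maximum of
`w` and of the numbers `2 n + 3` over all factors `c_n`. These respect the relations, and since
every element is `b^i` or `b^m c_n` (`m ≤ n`) up to a factor `a`, they determine it. For sign `1`,
the powers of `b` are exactly the elements with `w = u`, and `x ≠ 1` lies in `P` iff
either `w` is even and `w = u`, or `w` is odd and `w < u`.

To separate `x ≠ y`, first make the sign of `x` equal to `1` by a factor `a`. If the signs or the
parities of the weights differ, a high power of `b` makes `w = u` on both sides and separates them.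
Otherwise it is enough to multiply by some `z` giving `w = u` on one side only: if `x` is the
lighter one, `z = c_j` with `j + 1 = w(y)`; if the weights agree and `x` has the lower level,
`z = b^(u(x) - w(x))`.
-/

section Distinguishable

variable {M : Type*} [CommMonoid M] {P : Set M} {x y : M}

/-- In the bipartite monoid `(M, P)`, some multiplication sends exactly one of `x`, `y` into `P`;
`(M, P)` is reduced when this holds for all `x ≠ y`. -/
def Distinguishable (P : Set M) (x y : M) : Prop :=
  ∃ z, Xor (x * z ∈ P) (y * z ∈ P)

lemma Distinguishable.symm (h : Distinguishable P x y) : Distinguishable P y x :=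
  h.imp fun _ => Or.symm

lemma Distinguishable.of_mul_right (z : M) (h : Distinguishable P (x * z) (y * z)) :
    Distinguishable P x y := by
  obtain ⟨t, ht⟩ := h
  exact ⟨z * t, by simpa only [mul_assoc] using ht⟩

end Distinguishable

/-- The commutative monoid in which the weight and the level of an element of `Q` take values:
weights add up, and the level of a product is the maximum of its weight and of both levels. -/
@[ext]
structure WeightLevel where
  weight : ℕ
  level : ℕ
  weight_le_level : weight ≤ level
  level_le_two_mul_weight : level ≤ 2 * weight

namespace WeightLevel

instance : One WeightLevel := ⟨⟨0, 0, le_rfl, le_rfl⟩⟩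

instance : Mul WeightLevel where
  mul p q :=
    { weight := p.weight + q.weight
      level := max (p.weight + q.weight) (max p.level q.level)
      weight_le_level := le_max_left _ _
      level_le_two_mul_weight := by
        have := p.level_le_two_mul_weight
        have := q.level_le_two_mul_weight
        omega }

@[simp] lemma weight_one : (1 : WeightLevel).weight = 0 := rfl

@[simp] lemma level_one : (1 : WeightLevel).level = 0 := rfl

@[simp] lemma weight_mul (p q : WeightLevel) : (p * q).weight = p.weight + q.weight := rfl

@[simp] lemma level_mul (p q : WeightLevel) :
    (p * q).level = max (p.weight + q.weight) (max p.level q.level) := rfl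

instance : CommMonoid WeightLevel where
  mul_assoc p q r := by ext <;> simp only [weight_mul, level_mul] <;> omega
  mul_comm p q := by ext <;> simp only [weight_mul, level_mul] <;> omega
  one_mul p := by ext <;> simp [p.weight_le_level]
  mul_one p := by ext <;> simp [p.weight_le_level]

lemma mk_one_one_pow (i : ℕ) :
    (⟨1, 1, le_rfl, one_le_two⟩ : WeightLevel) ^ i =
      ⟨i, i, le_rfl, Nat.le_mul_of_pos_left i two_pos⟩ := by
  induction i with
  | zero => rfl
  | succ i ih => rw [pow_succ, ih]; ext <;> simp

end WeightLevel

namespace Q026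

lemma qa_mul_qa : qa * qa = 1 := by
  have h : conGen rel026 (fa ^ 2) 1 := .of _ _ (.inl ⟨rfl, rfl⟩)
  rw [pow_two] at h
  exact (Con.eq _).2 h

lemma qb_pow_mul_qc (n : ℕ) : qb ^ (n + 1) * qc n = qb ^ (2 * n + 3) :=
  (Con.eq _).2 (.of _ _ (.inr (.inl ⟨n, rfl, rfl⟩)))

lemma qc_mul_qc {m n : ℕ} (hmn : m ≤ n) : qc m * qc n = qb ^ (m + 2) * qc n :=
  (Con.eq _).2 (.of _ _ (.inr (.inr ⟨m, n, hmn, rfl, rfl⟩)))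

lemma induction_on {p : Q026 → Prop} (x : Q026) (one : p 1) (qa_mul : ∀ x, p x → p (qa * x))
    (qb_mul : ∀ x, p x → p (qb * x)) (qc_mul : ∀ n x, p x → p (qc n * x)) : p x := by
  induction x using Con.induction_on with
  | H s =>
    induction s using Multiset.induction with
    | empty => exact one
    | cons g s ih =>
      cases g with
      | a => exact qa_mul _ ih
      | b => exact qb_mul _ ih
      | c n => exact qc_mul n _ ih

section Lift

variable {M : Type*} [CommMonoid M]

/-- The homomorphism from the free commutative monoid with the given values on the generators. -/
def freeLift (f : Gen026 → M) : FM026 →* M where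
  toFun s := (s.toAdd.map f).prod
  map_one' := by simp
  map_mul' s t := by simp

lemma freeLift_fgen026 (f : Gen026 → M) (g : Gen026) : freeLift f (fgen026 g) = f g :=
  Multiset.prod_singleton (f g)

variable (f : Gen026 → M) (ha : f .a ^ 2 = 1)
  (hbc : ∀ n, f .b ^ (n + 1) * f (.c n) = f .b ^ (2 * n + 3))
  (hcc : ∀ m n, m ≤ n → f (.c m) * f (.c n) = f .b ^ (m + 2) * f (.c n))

/-- The universal property of the presentation of `Q`: values on the generators which satisfy the
defining relations extend to a homomorphism. -/
def lift : Q026 →* M :=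
  (conGen rel026).lift (freeLift f) <| Con.conGen_le.2 <| by
    rintro _ _ (⟨rfl, rfl⟩ | ⟨n, rfl, rfl⟩ | ⟨m, n, hmn, rfl, rfl⟩) <;>
      simp only [Con.ker_rel, map_mul, map_pow, map_one, fa, fb, fc, freeLift_fgen026]
    · exact ha
    · exact hbc n
    · exact hcc m n hmn

lemma lift_qa : lift f ha hbc hcc qa = f .a := freeLift_fgen026 f .a

lemma lift_qb : lift f ha hbc hcc qb = f .b := freeLift_fgen026 f .b

lemma lift_qc (n : ℕ) : lift f ha hbc hcc (qc n) = f (.c n) := freeLift_fgen026 f (.c n)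

end Lift

/-- The character of `Q` which counts the factors `a` mod `2`. -/
def sign : Q026 →* ℤˣ :=
  lift (fun | .a => -1 | .b => 1 | .c _ => 1) (by simp) (by simp) (by simp)

@[simp] lemma sign_qa : sign qa = -1 := lift_qa ..

@[simp] lemma sign_qb : sign qb = 1 := lift_qb ..

@[simp] lemma sign_qc (n : ℕ) : sign (qc n) = 1 := lift_qc ..

/-- The weight and the level of an element of `Q`. The relation `b^(n+1) c_n = b^(2n+3)` forces
`c_n` to weigh `n + 2`; its level `2n + 3` is the weight at which `b^k c_n` becomes a power of
`b`. -/
def weightLevel : Q026 →* WeightLevel :=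
  lift
    (fun
      | .a => 1
      | .b => ⟨1, 1, le_rfl, one_le_two⟩
      | .c n => ⟨n + 2, 2 * n + 3, by omega, by omega⟩)
    (one_pow 2)
    (fun n => by
      simp only [WeightLevel.mk_one_one_pow]
      ext <;> simp only [WeightLevel.weight_mul, WeightLevel.level_mul] <;> omega)
    (fun m n hmn => by
      simp only [WeightLevel.mk_one_one_pow]
      ext <;> simp only [WeightLevel.weight_mul, WeightLevel.level_mul]
      omega)

lemma weightLevel_qb_pow (i : ℕ) :
    weightLevel (qb ^ i) = ⟨i, i, le_rfl, Nat.le_mul_of_pos_left i two_pos⟩ := by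
  rw [map_pow, ← WeightLevel.mk_one_one_pow]
  exact congrArg (· ^ i) (lift_qb ..)

lemma weightLevel_qc (n : ℕ) :
    weightLevel (qc n) = ⟨n + 2, 2 * n + 3, by omega, by omega⟩ :=
  lift_qc ..

/-- The additive weight on `Q` with `a ↦ 0`, `b ↦ 1` and `c_n ↦ n + 2`. -/
def weight (x : Q026) : ℕ := (weightLevel x).weight

/-- The maximum of the weight and of `2n + 3` over all factors `c_n`. -/
def level (x : Q026) : ℕ := (weightLevel x).level

lemma weight_le_level (x : Q026) : weight x ≤ level x := (weightLevel x).weight_le_level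

lemma level_le_two_mul_weight (x : Q026) : level x ≤ 2 * weight x :=
  (weightLevel x).level_le_two_mul_weight

@[simp] lemma weight_mul (x y : Q026) : weight (x * y) = weight x + weight y := by
  simp [weight]

@[simp] lemma level_mul (x y : Q026) :
    level (x * y) = max (weight x + weight y) (max (level x) (level y)) := by
  simp [weight, level]

@[simp] lemma level_qa : level qa = 0 :=
  congrArg WeightLevel.level (lift_qa ..)

@[simp] lemma weight_qb_pow (i : ℕ) : weight (qb ^ i) = i := by
  simp [weight, weightLevel_qb_pow]

@[simp] lemma level_qb_pow (i : ℕ) : level (qb ^ i) = i := by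
  simp [level, weightLevel_qb_pow]

@[simp] lemma weight_qc (n : ℕ) : weight (qc n) = n + 2 := by
  simp [weight, weightLevel_qc]

@[simp] lemma level_qc (n : ℕ) : level (qc n) = 2 * n + 3 := by
  simp [level, weightLevel_qc]

lemma level_qb_pow_mul_qc {m n : ℕ} (hmn : m ≤ n) : level (qb ^ m * qc n) = 2 * n + 3 := by
  simp only [level_mul, weight_qb_pow, level_qb_pow, weight_qc, level_qc]
  omega

lemma weight_mul_qb_pow_eq_level {x : Q026} {k : ℕ} (hk : level x ≤ k) :
    weight (x * qb ^ k) = level (x * qb ^ k) := by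
  simp only [weight_mul, level_mul, weight_qb_pow, level_qb_pow]
  omega

/-- The normal forms of the elements of `Q` without a factor `a`. -/
inductive IsNormal : Q026 → Prop
  | qb_pow (i : ℕ) : IsNormal (qb ^ i)
  | qb_pow_mul_qc {m n : ℕ} (hmn : m ≤ n) : IsNormal (qb ^ m * qc n)

lemma isNormal_qb_pow_mul_qc (m n : ℕ) : IsNormal (qb ^ m * qc n) := by
  rcases le_or_gt m n with hmn | hnm
  · exact .qb_pow_mul_qc hmn
  · obtain ⟨k, rfl⟩ := Nat.exists_eq_add_of_le hnm
    have absorb : qb ^ (n + 1 + k) * qc n = qb ^ (2 * n + 3 + k) := by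
      rw [pow_add, mul_right_comm, qb_pow_mul_qc, ← pow_add]
    exact absorb ▸ .qb_pow _

lemma IsNormal.qb_mul {x : Q026} (hx : IsNormal x) : IsNormal (qb * x) := by
  cases hx with
  | qb_pow i => exact pow_succ' qb i ▸ .qb_pow (i + 1)
  | @qb_pow_mul_qc m n _ =>
    rw [← mul_assoc, ← pow_succ']
    exact isNormal_qb_pow_mul_qc (m + 1) n

lemma exists_qc_mul_qc_eq (m n : ℕ) : ∃ k l, qc m * qc n = qb ^ k * qc l := by
  rcases le_total m n with hmn | hnm
  · exact ⟨m + 2, n, qc_mul_qc hmn⟩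
  · exact ⟨n + 2, m, mul_comm (qc m) (qc n) ▸ qc_mul_qc hnm⟩

lemma IsNormal.qc_mul {x : Q026} (hx : IsNormal x) (j : ℕ) : IsNormal (qc j * x) := by
  cases hx with
  | qb_pow i => exact mul_comm (qb ^ i) (qc j) ▸ isNormal_qb_pow_mul_qc i j
  | @qb_pow_mul_qc m n _ =>
    obtain ⟨k, l, hkl⟩ := exists_qc_mul_qc_eq j n
    rw [mul_left_comm, hkl, ← mul_assoc, ← pow_add]
    exact isNormal_qb_pow_mul_qc (m + k) l

lemma isNormal_or_isNormal_qa_mul (x : Q026) : IsNormal x ∨ IsNormal (qa * x) := by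
  induction x using Q026.induction_on with
  | one => exact .inl (.qb_pow 0)
  | qa_mul x ih =>
    rw [← mul_assoc, qa_mul_qa, one_mul]
    exact ih.symm
  | qb_mul x ih =>
    rw [mul_left_comm]
    exact ih.imp IsNormal.qb_mul IsNormal.qb_mul
  | qc_mul n x ih =>
    rw [mul_left_comm]
    exact ih.imp (·.qc_mul n) (·.qc_mul n)

lemma IsNormal.sign_eq_one {x : Q026} (hx : IsNormal x) : sign x = 1 := by
  cases hx <;> simp

lemma isNormal_of_sign_eq_one {x : Q026} (hx : sign x = 1) : IsNormal x := by
  refine (isNormal_or_isNormal_qa_mul x).resolve_right fun h => ?_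
  have : sign (qa * x) = 1 := h.sign_eq_one
  simp [hx] at this

variable {x y z : Q026}

lemma eq_of_weight_eq_of_level_eq (hx : sign x = 1) (hy : sign y = 1)
    (hweight : weight x = weight y) (hlevel : level x = level y) : x = y := by
  cases isNormal_of_sign_eq_one hx <;> cases isNormal_of_sign_eq_one hy <;>
    simp only [weight_mul, level_mul, weight_qb_pow, level_qb_pow, weight_qc, level_qc]
      at hweight hlevel
  case qb_pow.qb_pow => rw [hweight]
  case qb_pow.qb_pow_mul_qc => omega
  case qb_pow_mul_qc.qb_pow => omega
  case qb_pow_mul_qc.qb_pow_mul_qc m n _ k l _ =>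
    obtain rfl : n = l := by omega
    obtain rfl : m = k := by omega
    rfl

lemma sign_eq_one_or_level_eq_zero_of_mem_P026 (hx : x ∈ P026) : sign x = 1 ∨ level x = 0 := by
  rcases hx with (rfl | ⟨m, -, rfl⟩) | ⟨m, n, -, -, rfl⟩ <;> simp

lemma mem_P026_iff_of_sign_eq_one (hx : sign x = 1) :
    x ∈ P026 ↔ level x ≠ 0 ∧ (Even (weight x) ↔ weight x = level x) := by
  constructor
  · rintro ((rfl | ⟨m, hm, rfl⟩) | ⟨m, n, hmn, hodd, rfl⟩)
    · simp at hx
    · simpa using Nat.ne_of_gt hm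
    · rw [level_qb_pow_mul_qc hmn, weight_mul, weight_qb_pow, weight_qc]
      grind
  · rintro ⟨hlevel, heven⟩
    cases isNormal_of_sign_eq_one hx with
    | qb_pow i =>
      simp only [level_qb_pow, weight_qb_pow, iff_true] at hlevel heven
      obtain ⟨k, rfl⟩ := even_iff_exists_two_mul.1 heven
      exact .inl (.inr ⟨k, by omega, rfl⟩)
    | @qb_pow_mul_qc m n hmn =>
      rw [level_qb_pow_mul_qc hmn, weight_mul, weight_qb_pow, weight_qc] at heven
      exact .inr ⟨m, n, hmn, by grind, rfl⟩

lemma mem_P026_iff_even (hx : sign x = 1) (hweight : weight x = level x) (hlevel : level x ≠ 0) :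
    x ∈ P026 ↔ Even (weight x) := by
  simp [mem_P026_iff_of_sign_eq_one hx, hweight, hlevel]

lemma mem_P026_iff_not_even (hx : sign x = 1) (hweight : weight x < level x) :
    x ∈ P026 ↔ ¬Even (weight x) := by
  simp [mem_P026_iff_of_sign_eq_one hx, hweight.ne, Nat.ne_zero_of_lt hweight]

lemma distinguishable_of_sign_ne_or_parity_ne (hx : sign x = 1)
    (h : sign y ≠ 1 ∨ ¬(Even (weight x) ↔ Even (weight y))) : Distinguishable P026 x y := by
  -- The exponent has the parity of `weight x` and exceeds both levels.
  let k := 2 * (level x + level y + 1) + weight x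
  have even_add_k (w : ℕ) : Even (w + k) ↔ (Even w ↔ Even (weight x)) := by
    simp [k, Nat.even_add]
  have level_ne_zero (t : Q026) : level (t * qb ^ k) ≠ 0 := by simp [k]
  have mem_iff {t : Q026} (ht : sign (t * qb ^ k) = 1) (hk : level t ≤ k) :
      t * qb ^ k ∈ P026 ↔ (Even (weight t) ↔ Even (weight x)) := by
    rw [mem_P026_iff_even ht (weight_mul_qb_pow_eq_level hk) (level_ne_zero t), weight_mul,
      weight_qb_pow, even_add_k]
  refine ⟨qb ^ k, .inl ⟨(mem_iff (by simp [hx]) (by omega)).2 Iff.rfl, fun hmem => ?_⟩⟩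
  have hyk : sign (y * qb ^ k) = 1 :=
    (sign_eq_one_or_level_eq_zero_of_mem_P026 hmem).resolve_right (level_ne_zero y)
  have hy : sign y = 1 := by simpa using hyk
  exact h.elim (· hy) (· ((mem_iff hyk (by omega)).1 hmem).symm)

lemma distinguishable_of_weight_mul_eq_level (hx : sign x = 1) (hy : sign y = 1) (hz : sign z = 1)
    (hparity : Even (weight x) ↔ Even (weight y)) (hxz : weight (x * z) = level (x * z))
    (hxz_pos : level (x * z) ≠ 0) (hyz : weight (y * z) < level (y * z)) :
    Distinguishable P026 x y := by
  refine ⟨z, xor_iff_iff_not.2 ?_⟩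
  calc x * z ∈ P026 ↔ Even (weight (x * z)) :=
        mem_P026_iff_even (by simp [hx, hz]) hxz hxz_pos
    _ ↔ Even (weight (y * z)) := by simp only [weight_mul, Nat.even_add, hparity]
    _ ↔ y * z ∉ P026 :=
        iff_not_comm.1 (mem_P026_iff_not_even (by simp [hy, hz]) hyz)

lemma distinguishable_of_weight_lt (hx : sign x = 1) (hy : sign y = 1)
    (hparity : Even (weight x) ↔ Even (weight y)) (hlt : weight x < weight y) :
    Distinguishable P026 x y := by
  have := level_le_two_mul_weight y
  apply Distinguishable.symm
  apply distinguishable_of_weight_mul_eq_level (z := qc (weight y - 1)) hy hx (sign_qc _)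
    hparity.symm <;> simp only [weight_mul, level_mul, weight_qc, level_qc] <;> omega

lemma distinguishable_of_level_lt (hx : sign x = 1) (hy : sign y = 1)
    (hweight : weight x = weight y) (hlt : level x < level y) : Distinguishable P026 x y := by
  have := weight_le_level x
  have := level_le_two_mul_weight y
  apply distinguishable_of_weight_mul_eq_level (z := qb ^ (level x - weight x)) hx hy (by simp)
    (by rw [hweight]) <;>
    simp only [weight_mul, level_mul, weight_qb_pow, level_qb_pow] <;> omega

lemma distinguishable_of_sign_eq_one (hx : sign x = 1) (hxy : x ≠ y) :
    Distinguishable P026 x y := by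
  by_cases h : sign y = 1 ∧ (Even (weight x) ↔ Even (weight y))
  · obtain ⟨hy, hparity⟩ := h
    rcases lt_trichotomy (weight x) (weight y) with hlt | hweight | hgt
    · exact distinguishable_of_weight_lt hx hy hparity hlt
    · have hlevel : level x ≠ level y := fun h =>
        hxy (eq_of_weight_eq_of_level_eq hx hy hweight h)
      rcases hlevel.lt_or_gt with hlt | hgt
      · exact distinguishable_of_level_lt hx hy hweight hlt
      · exact (distinguishable_of_level_lt hy hx hweight.symm hgt).symm
    · exact (distinguishable_of_weight_lt hy hx hparity.symm hgt).symm
  · exact distinguishable_of_sign_ne_or_parity_ne hx (not_and_or.1 h)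

end Q026

/-- The bipartite monoid `(Q, P)` for 0.26 is reduced: any two distinct
elements are distinguished by multiplication into `P`. -/
theorem Q026_reduced :
    ∀ x y : Q026, x ≠ y → ∃ z : Q026, Xor' (x * z ∈ P026) (y * z ∈ P026) := by
  intro x y hxy
  rcases Int.units_eq_one_or (Q026.sign x) with hx | hx
  · exact Q026.distinguishable_of_sign_eq_one hx hxy
  · have hxa : Q026.sign (x * qa) = 1 := by simp [hx]
    have hne : x * qa ≠ y * qa := fun h => hxy <| by
      simpa [mul_assoc, Q026.qa_mul_qa] using congrArg (· * qa) h
    exact (Q026.distinguishable_of_sign_eq_one hxa hne).of_mul_right qa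
end

section
/- In the monoid Q associated to the game 0.26, for all heap sizes k ≤ k' one has Φ(H_k)·Φ(H_{k'}) = a^{g(H_k)} · b^{t(H_k)} · Φ(H_{k'}), where g(H_k) = (k-1) mod 4. -/
/-!
The idea is that `c_n` behaves like `b^(n+2)` wherever it can. On pure powers of `b` this is the
relation `b^i c_n = b^(i+n+2)` for `i > n`; on `b^d c_m` it holds as soon as `n ≤ d + m`, either by
the relation `c_n c_m = b^(n+2) c_m` or because both sides collapse to the same power of `b`.

The heaps with `k ≤ 8` have value `a^g b^t`. The larger ones have value `a^g b^d c_n` with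
`d + n + 2 = t`, so that `t` is the exponent of `b` obtained by reading `c_n` as `b^(n+2)`. This
reading is legitimate in front of the value of `H_k'` when `n + 2 ≤ t(H_k')`, which follows from
`n + 2 ≤ t(H_k)` because `t` is monotone from `k = 5` on (it drops from `1` to `0` between `4`
and `5`).
-/

lemma mk'_eq_mk'_of_rel026 {x y : FM026} (h : rel026 x y) :
    (conGen rel026).mk' x = (conGen rel026).mk' y :=
  (Con.eq _).2 (ConGen.Rel.of _ _ h)

lemma qa_sq : qa ^ 2 = 1 :=
  mk'_eq_mk'_of_rel026 (.inl ⟨rfl, rfl⟩)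

lemma qb_pow_succ_mul_qc (n : ℕ) : qb ^ (n + 1) * qc n = qb ^ (2 * n + 3) :=
  mk'_eq_mk'_of_rel026 (.inr (.inl ⟨n, rfl, rfl⟩))

lemma qc_mul_qc_of_le {m n : ℕ} (h : m ≤ n) : qc m * qc n = qb ^ (m + 2) * qc n :=
  mk'_eq_mk'_of_rel026 (.inr (.inr ⟨m, n, h, rfl, rfl⟩))

lemma qb_pow_mul_qc_of_lt {n i : ℕ} (h : n < i) : qb ^ i * qc n = qb ^ (i + n + 2) := by
  obtain ⟨j, rfl⟩ := Nat.exists_eq_add_of_le' (Nat.succ_le_of_lt h)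
  calc qb ^ (j + (n + 1)) * qc n = qb ^ j * (qb ^ (n + 1) * qc n) := by rw [pow_add, mul_assoc]
    _ = qb ^ (j + (n + 1) + n + 2) := by rw [qb_pow_succ_mul_qc, ← pow_add]; congr 1; omega

lemma qc_mul_qb_pow_mul_qc {n m d : ℕ} (h : n ≤ d + m) :
    qc n * (qb ^ d * qc m) = qb ^ (n + 2) * (qb ^ d * qc m) := by
  rcases le_or_gt n m with hnm | hmn
  · rw [mul_left_comm, qc_mul_qc_of_le hnm, mul_left_comm]
  · calc qc n * (qb ^ d * qc m) = qb ^ d * (qc m * qc n) := by rw [mul_left_comm, mul_comm (qc n)]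
      _ = qb ^ (d + (m + 2)) * qc n := by rw [qc_mul_qc_of_le hmn.le, ← mul_assoc, ← pow_add]
      _ = qb ^ (d + (m + 2) + n + 2) := qb_pow_mul_qc_of_lt (by omega)
      _ = qb ^ (n + 2 + d + m + 2) := by congr 1; omega
      _ = qb ^ (n + 2 + d) * qc m := (qb_pow_mul_qc_of_lt (by omega)).symm
      _ = qb ^ (n + 2) * (qb ^ d * qc m) := by rw [pow_add, mul_assoc]

lemma t026_of_five_le {k : ℕ} (h : 5 ≤ k) : t026 k = (k - 5) / 2 := by
  rw [t026, if_neg (by omega), if_neg (by omega)]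

lemma two_le_t026_iff {k : ℕ} : 2 ≤ t026 k ↔ 9 ≤ k := by
  unfold t026
  split_ifs <;> omega

lemma monotoneOn_t026 : MonotoneOn t026 (Set.Ici 5) := by
  intro k hk k' hk' hkk'
  rw [t026_of_five_le hk, t026_of_five_le hk']
  exact Nat.div_le_div_right (Nat.sub_le_sub_right hkk' 5)

lemma phi026_of_le_eight {k : ℕ} (hk : 1 ≤ k) (hk8 : k ≤ 8) :
    phi026 k = qa ^ ((k - 1) % 4) * qb ^ t026 k := by
  have qa_cube : qa ^ 3 = qa := by rw [pow_succ, qa_sq, one_mul]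
  interval_cases k <;> simp [phi026, t026, qa_sq, qa_cube]

lemma phi026_ten : phi026 10 = qa * qc 0 := by
  simp [phi026]

lemma phi026_two_mul_add_nine (n : ℕ) : phi026 (2 * n + 9) = qc n := by
  rcases n with _ | n
  · simp [phi026]
  · unfold phi026
    rw [if_neg (by omega), if_neg (by omega), if_neg (by omega), if_pos (by omega)]
    congr 1
    omega

lemma phi026_two_mul_add_twelve (n : ℕ) : phi026 (2 * n + 12) = qa * (qb * qc n) := by
  unfold phi026
  rw [if_neg (by omega), if_neg (by omega), if_neg (by omega), if_neg (by omega), mul_assoc]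
  congr 3
  omega

lemma exists_phi026_eq_of_nine_le {k : ℕ} (hk : 9 ≤ k) :
    ∃ d n : ℕ, d + n + 2 = t026 k ∧ phi026 k = qa ^ ((k - 1) % 4) * (qb ^ d * qc n) := by
  rw [t026_of_five_le (by omega), pow_eq_pow_mod _ qa_sq]
  rcases Nat.even_or_odd' k with ⟨i, rfl | rfl⟩
  · rw [show (2 * i - 1) % 4 % 2 = 1 by omega, pow_one]
    obtain rfl | hi : i = 5 ∨ 6 ≤ i := by omega
    · exact ⟨0, 0, rfl, by rw [phi026_ten, pow_zero, one_mul]⟩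
    · obtain ⟨n, rfl⟩ := Nat.exists_eq_add_of_le' hi
      exact ⟨1, n, by omega, by rw [mul_add, phi026_two_mul_add_twelve, pow_one]⟩
  · rw [show (2 * i + 1 - 1) % 4 % 2 = 0 by omega, pow_zero]
    obtain ⟨n, rfl⟩ := Nat.exists_eq_add_of_le' (show 4 ≤ i by omega)
    refine ⟨0, n, by omega, ?_⟩
    rw [show 2 * (n + 4) + 1 = 2 * n + 9 by ring, phi026_two_mul_add_nine, pow_zero, one_mul,
      one_mul]

lemma qc_mul_phi026 {n k : ℕ} (h : n + 2 ≤ t026 k) :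
    qc n * phi026 k = qb ^ (n + 2) * phi026 k := by
  have hk : 9 ≤ k := two_le_t026_iff.1 (by omega)
  obtain ⟨d, m, ht, hphi⟩ := exists_phi026_eq_of_nine_le hk
  rw [hphi, mul_left_comm, qc_mul_qb_pow_mul_qc (by omega), mul_left_comm]

/-- For heap sizes `1 ≤ k ≤ k'`, one has
`Φ(H_k) Φ(H_k') = a^(g(H_k)) b^(t(H_k)) Φ(H_k')`, where `g(H_k) = (k-1) % 4`
is the Grundy value of a single heap in 0.26. -/
theorem phi026_two_heaps :
    ∀ k k' : ℕ, 1 ≤ k → k ≤ k' →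
      phi026 k * phi026 k' = qa ^ ((k - 1) % 4) * qb ^ t026 k * phi026 k' := by
  intro k k' hk hkk'
  rcases le_or_gt k 8 with hk8 | hk9
  · rw [phi026_of_le_eight hk hk8]
  · obtain ⟨d, n, ht, hphi⟩ := exists_phi026_eq_of_nine_le hk9
    have ht' : t026 k ≤ t026 k' :=
      monotoneOn_t026 (Set.mem_Ici.2 (by omega)) (Set.mem_Ici.2 (by omega)) hkk'
    calc phi026 k * phi026 k' = qa ^ ((k - 1) % 4) * (qb ^ d * (qc n * phi026 k')) := by
          simp only [hphi, mul_assoc]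
      _ = qa ^ ((k - 1) % 4) * (qb ^ d * (qb ^ (n + 2) * phi026 k')) := by
          rw [qc_mul_phi026 (by omega)]
      _ = qa ^ ((k - 1) % 4) * qb ^ t026 k * phi026 k' := by
          simp only [← ht, pow_add, mul_assoc]
end

section
/- For every position G of the octal game 0.26, t(G) is even if and only if the bitwise XOR, over all heaps of size k in G (with multiplicity), of the values (k-1) mod 4 lies in {0, 1}. -/
/-- The bitwise XOR of a multiset of naturals. -/
def xorSum (s : Multiset ℕ) : ℕ := s.fold (· ^^^ ·) 0

theorem toNat_xor (a b : Bool) : (a ^^ b).toNat = (a.toNat + b.toNat) % 2 := by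
  decide +revert

theorem testBit_eq_false_iff_lt_two_pow {n a : ℕ} (ha : a < 2 ^ (n + 1)) :
    a.testBit n = false ↔ a < 2 ^ n := by
  refine ⟨fun hbit => Nat.lt_pow_two_of_testBit a fun i hi => ?_, Nat.testBit_lt_two_pow⟩
  obtain rfl | hlt := hi.eq_or_lt
  · exact hbit
  · exact Nat.testBit_lt_two_pow (ha.trans_le (Nat.pow_le_pow_right two_pos hlt))

theorem xorSum_zero : xorSum 0 = 0 := Multiset.fold_zero _ _

theorem xorSum_cons (a : ℕ) (s : Multiset ℕ) : xorSum (a ::ₘ s) = a ^^^ xorSum s :=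
  Multiset.fold_cons_left _ _ _ _

theorem xorSum_lt_two_pow {n : ℕ} {s : Multiset ℕ} (hs : ∀ a ∈ s, a < 2 ^ n) :
    xorSum s < 2 ^ n := by
  induction s using Multiset.induction_on with
  | empty => exact xorSum_zero ▸ Nat.two_pow_pos n
  | cons a s ih =>
    rw [Multiset.forall_mem_cons] at hs
    exact xorSum_cons a s ▸ Nat.xor_lt_two_pow hs.1 (ih hs.2)

theorem toNat_testBit_xorSum (s : Multiset ℕ) (i : ℕ) :
    ((xorSum s).testBit i).toNat = (s.map fun a => (a.testBit i).toNat).sum % 2 := by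
  induction s using Multiset.induction_on with
  | empty => simp [xorSum_zero]
  | cons a s ih =>
    rw [xorSum_cons, Nat.testBit_xor, toNat_xor, ih, Nat.add_mod_mod,
      Multiset.map_cons, Multiset.sum_cons]

theorem t026_mod_two_eq_toNat_testBit (k : ℕ) : t026 k % 2 = (((k - 1) % 4).testBit 1).toNat := by
  rw [Nat.toNat_testBit]
  unfold t026
  split_ifs <;> omega

theorem tPos026_mod_two_eq_toNat_testBit_xorSum (G : Multiset ℕ) :
    tPos026 G % 2 = ((xorSum (G.map fun k => (k - 1) % 4)).testBit 1).toNat := by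
  rw [tPos026, Multiset.sum_nat_mod, Multiset.map_map, toNat_testBit_xorSum, Multiset.map_map]
  simp only [Function.comp_def, t026_mod_two_eq_toNat_testBit]

/-- For every position `G` of 0.26 (a finite multiset of positive heap sizes),
`t(G)` is even iff the bitwise XOR over the heaps `k` of `G` (with
multiplicity) of the values `(k - 1) % 4` lies in `{0, 1}`. -/
theorem t026_even_iff_xor :
    ∀ G : Multiset ℕ, (∀ k ∈ G, 1 ≤ k) →
      (tPos026 G % 2 = 0 ↔
        xorSum (G.map fun k => (k - 1) % 4) ∈ ({0, 1} : Set ℕ)) := by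
  intro G _
  have hlt : xorSum (G.map fun k => (k - 1) % 4) < 2 ^ 2 :=
    xorSum_lt_two_pow (Multiset.forall_mem_map_iff.2 fun k _ => Nat.mod_lt (k - 1) four_pos)
  rw [tPos026_mod_two_eq_toNat_testBit_xorSum, Bool.toNat_eq_zero,
    testBit_eq_false_iff_lt_two_pow hlt, pow_one, Nat.lt_succ_iff,
    Nat.le_one_iff_eq_zero_or_eq_one, Set.mem_insert_iff, Set.mem_singleton_iff]
end

section
/- In the octal game 4.7, the normal-play Grundy value of a single heap of size k is 2 if k is even and 1 if k is odd, for every k ≥ 1. -/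
/-- One legal move in the octal game 4.7: split a heap into two nonempty heaps
removing no beans; or remove 1 bean, either removing the whole heap, leaving
one nonempty heap, or splitting the remainder into two nonempty heaps.
Positions are finite multisets of heap sizes. -/
def Move47 (G G' : Multiset ℕ) : Prop :=
  (∃ k ∈ G, ∃ i j : ℕ, 1 ≤ i ∧ 1 ≤ j ∧ i + j = k ∧ G' = i ::ₘ j ::ₘ G.erase k) ∨
  (1 ∈ G ∧ G' = G.erase 1) ∨
  (∃ k ∈ G, 2 ≤ k ∧ G' = (k - 1) ::ₘ G.erase k) ∨
  (∃ k ∈ G, 3 ≤ k ∧ ∃ i j : ℕ, 1 ≤ i ∧ 1 ≤ j ∧ i + j = k - 1 ∧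
    G' = i ::ₘ j ::ₘ G.erase k)

/-!
Each move replaces one heap by strictly smaller heaps, so play terminates by the hydra theorem and,
by Sprague–Grundy, the Grundy value of a position is the nim-sum of the values of its heaps. The
mex rule only has to be checked on single heaps, with value `1` on odd and `2` on even sizes: two
nonempty heaps have nim-sum `0` or `3` according to the parity of their total, so the options of an
odd heap have values in `{0, 2, 3}` and those of an even heap in `{0, 1, 3}`. The value `0`
is attained by replacing a heap of size `2 * m` or `2 * m + 1` by two heaps of size `m`, and the
value `1` by removing a bean from an even heap.
-/

theorem mex_eq_of_isLeast {s : Set ℕ} {n : ℕ} (hn : IsLeast sᶜ n) : mex s = n :=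
  hn.csInf_eq

theorem eq_of_mex_recursion {α : Type*} {move : α → α → Prop}
    (hwf : WellFounded fun y x => move x y) {f g : α → ℕ}
    (hf : ∀ x, f x = mex (f '' {y | move x y})) (hg : ∀ x, g x = mex (g '' {y | move x y})) :
    f = g := by
  funext x
  induction x using hwf.induction with
  | _ x ih => rw [hf, hg, Set.image_congr (s := {y | move x y}) ih]

section DisjunctiveSum

variable {α : Type*}

/-- The nim-sum (bitwise exclusive or) of the values `v a` over the components `a` of a position,
counted with multiplicity. -/
def nimSum (v : α → ℕ) (G : Multiset α) : ℕ :=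
  (G.map v).fold (· ^^^ ·) 0

theorem nimSum_zero (v : α → ℕ) : nimSum v 0 = 0 := rfl

theorem nimSum_cons (v : α → ℕ) (a : α) (G : Multiset α) :
    nimSum v (a ::ₘ G) = v a ^^^ nimSum v G := by
  simp [nimSum]

theorem nimSum_singleton (v : α → ℕ) (a : α) : nimSum v {a} = v a := by
  rw [← Multiset.cons_zero, nimSum_cons, nimSum_zero, Nat.xor_zero]

theorem nimSum_add (v : α → ℕ) (G H : Multiset α) :
    nimSum v (G + H) = nimSum v G ^^^ nimSum v H := by
  induction G using Multiset.induction with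
  | empty => rw [zero_add, nimSum_zero, Nat.zero_xor]
  | cons a G ih => rw [Multiset.cons_add, nimSum_cons, nimSum_cons, ih, Nat.xor_assoc]

/-- A move in a disjunctive sum, where `opt a S` means that the component `a` may be replaced by
the components in `S`: exactly one component is replaced. -/
inductive SumMove (opt : α → Multiset α → Prop) : Multiset α → Multiset α → Prop
  | replace {a : α} {S : Multiset α} (haS : opt a S) (R : Multiset α) :
      SumMove opt (a ::ₘ R) (S + R)

variable {opt : α → Multiset α → Prop}

theorem SumMove.cons {G G' : Multiset α} (h : SumMove opt G G') (a : α) :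
    SumMove opt (a ::ₘ G) (a ::ₘ G') := by
  obtain ⟨hbS, R⟩ := h
  rw [Multiset.cons_swap, ← Multiset.add_cons]
  exact .replace hbS (a ::ₘ R)

theorem wellFounded_sumMove {r : α → α → Prop} (hr : WellFounded r)
    (hopt : ∀ a S, opt a S → ∀ b ∈ S, r b a) :
    WellFounded fun G' G => SumMove opt G G' := by
  refine Subrelation.wf ?_ hr.cutExpand
  rintro _ _ ⟨haS, R⟩
  refine ⟨_, _, hopt _ _ haS, ?_⟩
  rw [← Multiset.singleton_add]
  abel

section SpragueGrundy

variable {v : α → ℕ}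

theorem nimSum_ne_of_sumMove (hv : ∀ a S, opt a S → nimSum v S ≠ v a) {G G' : Multiset α}
    (h : SumMove opt G G') : nimSum v G' ≠ nimSum v G := by
  obtain ⟨haS, R⟩ := h
  rw [nimSum_add, nimSum_cons]
  exact fun heq => hv _ _ haS (Nat.xor_left_injective heq)

theorem exists_sumMove_of_lt_nimSum (hv : ∀ a, ∀ n < v a, ∃ S, opt a S ∧ nimSum v S = n)
    {G : Multiset α} {n : ℕ} (hn : n < nimSum v G) : ∃ G', SumMove opt G G' ∧ nimSum v G' = n := by
  induction G using Multiset.induction generalizing n with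
  | empty => simp [nimSum_zero] at hn
  | cons a R ih =>
    rw [nimSum_cons] at hn
    rcases Nat.lt_xor_cases hn with hlt | hlt
    · obtain ⟨S, haS, hS⟩ := hv a _ hlt
      refine ⟨S + R, .replace haS R, ?_⟩
      rw [nimSum_add, hS, Nat.xor_xor_cancel_right]
    · obtain ⟨R', hmove, hR'⟩ := ih hlt
      refine ⟨a ::ₘ R', hmove.cons a, ?_⟩
      rw [nimSum_cons, hR', Nat.xor_comm, Nat.xor_xor_cancel_right]

/-- Phrased with `IsLeast` because `mex Set.univ = 0` is a junk value, so that an equation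
`v a = mex _` would not exclude `v a` from the values of the options of `a`. -/
theorem isLeast_nimSum (hv : ∀ a, IsLeast (nimSum v '' {S | opt a S})ᶜ (v a)) (G : Multiset α) :
    IsLeast (nimSum v '' {G' | SumMove opt G G'})ᶜ (nimSum v G) := by
  constructor
  · rintro ⟨G', hmove, hG'⟩
    exact nimSum_ne_of_sumMove (fun a S haS hS => (hv a).1 ⟨S, haS, hS⟩) hmove hG'
  · intro n hn
    by_contra! hlt
    refine hn (exists_sumMove_of_lt_nimSum (fun a m hm => ?_) hlt)
    by_contra hm'
    exact hm.not_ge ((hv a).2 hm')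

end SpragueGrundy

end DisjunctiveSum

/-- The moves of the octal game 4.7 on a single heap, with the position that replaces it. -/
inductive HeapMove47 : ℕ → Multiset ℕ → Prop
  | split {i j : ℕ} (hi : 1 ≤ i) (hj : 1 ≤ j) : HeapMove47 (i + j) {i, j}
  | removeHeap : HeapMove47 1 0
  | removeOne {i : ℕ} (hi : 1 ≤ i) : HeapMove47 (i + 1) {i}
  | removeOneAndSplit {i j : ℕ} (hi : 1 ≤ i) (hj : 1 ≤ j) : HeapMove47 (i + j + 1) {i, j}

theorem HeapMove47.lt_of_mem {k i : ℕ} {S : Multiset ℕ} (h : HeapMove47 k S) (hi : i ∈ S) :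
    i < k := by
  cases h <;> simp at hi <;> omega

theorem move47_iff_sumMove {G G' : Multiset ℕ} : Move47 G G' ↔ SumMove HeapMove47 G G' := by
  constructor
  · rintro (⟨k, hk, i, j, hi, hj, rfl, rfl⟩ | ⟨hk, rfl⟩ | ⟨k, hk, h2, rfl⟩ |
      ⟨k, hk, _, i, j, hi, hj, hij, rfl⟩) <;>
    (obtain ⟨R, rfl⟩ := Multiset.exists_cons_of_mem hk; rw [Multiset.erase_cons_head])
    · simpa using SumMove.replace (HeapMove47.split hi hj) R
    · simpa using SumMove.replace HeapMove47.removeHeap R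
    · obtain ⟨i, rfl⟩ : ∃ i, k = i + 1 := ⟨k - 1, by omega⟩
      simpa using SumMove.replace (HeapMove47.removeOne (by omega : 1 ≤ i)) R
    · obtain rfl : k = i + j + 1 := by omega
      simpa using SumMove.replace (HeapMove47.removeOneAndSplit hi hj) R
  · rintro ⟨hkS, R⟩
    cases hkS with
    | @split i j hi hj => exact .inl ⟨i + j, by simp, i, j, hi, hj, rfl, by simp⟩
    | removeHeap => exact .inr (.inl (by simp))
    | @removeOne i hi => exact .inr (.inr (.inl ⟨i + 1, by simp, by omega, by simp⟩))
    | @removeOneAndSplit i j hi hj =>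
      exact .inr (.inr (.inr ⟨i + j + 1, by simp, by omega, i, j, hi, hj, rfl, by simp⟩))

theorem wellFounded_move47 : WellFounded fun G' G => Move47 G G' := by
  simpa only [move47_iff_sumMove] using
    wellFounded_sumMove wellFounded_lt fun _ _ h _ => HeapMove47.lt_of_mem h

/-- The Grundy value of a heap in the octal game 4.7. `Move47` allows heaps of size `0` in a
position; they admit no move, hence the value `0`. -/
def heapGrundy47 (k : ℕ) : ℕ :=
  if k = 0 then 0 else if k % 2 = 0 then 2 else 1

theorem heapGrundy47_of_pos {k : ℕ} (hk : 1 ≤ k) :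
    heapGrundy47 k = if k % 2 = 0 then 2 else 1 :=
  if_neg (by omega)

theorem nimSum_heapGrundy47_pair {i j : ℕ} (hi : 1 ≤ i) (hj : 1 ≤ j) :
    nimSum heapGrundy47 {i, j} = if (i + j) % 2 = 0 then 0 else 3 := by
  rw [Multiset.insert_eq_cons, nimSum_cons, nimSum_singleton, heapGrundy47_of_pos hi,
    heapGrundy47_of_pos hj]
  split_ifs <;> first | rfl | omega

theorem HeapMove47.nimSum_ne {k : ℕ} {S : Multiset ℕ} (h : HeapMove47 k S) :
    nimSum heapGrundy47 S ≠ heapGrundy47 k := by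
  cases h with
  | split hi hj =>
    rw [nimSum_heapGrundy47_pair hi hj, heapGrundy47_of_pos (by omega)]
    split_ifs <;> decide
  | removeHeap => decide
  | removeOne hi =>
    rw [nimSum_singleton, heapGrundy47_of_pos hi, heapGrundy47_of_pos (by omega)]
    split_ifs <;> omega
  | removeOneAndSplit hi hj =>
    rw [nimSum_heapGrundy47_pair hi hj, heapGrundy47_of_pos (by omega)]
    split_ifs <;> decide

theorem exists_heapMove47_nimSum_eq_zero {k : ℕ} (hk : 1 ≤ k) :
    ∃ S, HeapMove47 k S ∧ nimSum heapGrundy47 S = 0 := by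
  rcases Nat.even_or_odd' k with ⟨m, rfl | rfl⟩
  · have hm : 1 ≤ m := by omega
    refine ⟨{m, m}, two_mul m ▸ .split hm hm, ?_⟩
    rw [nimSum_heapGrundy47_pair hm hm, if_pos (by omega)]
  · obtain rfl | hm := m.eq_zero_or_pos
    · exact ⟨0, .removeHeap, nimSum_zero _⟩
    · refine ⟨{m, m}, two_mul m ▸ .removeOneAndSplit hm hm, ?_⟩
      rw [nimSum_heapGrundy47_pair hm hm, if_pos (by omega)]

theorem exists_heapMove47_nimSum_eq_one {k : ℕ} (hk : 1 ≤ k) (heven : k % 2 = 0) :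
    ∃ S, HeapMove47 k S ∧ nimSum heapGrundy47 S = 1 := by
  obtain ⟨i, rfl⟩ : ∃ i, k = i + 1 := ⟨k - 1, by omega⟩
  have hi : 1 ≤ i := by omega
  refine ⟨{i}, .removeOne hi, ?_⟩
  rw [nimSum_singleton, heapGrundy47_of_pos hi, if_neg (by omega)]

theorem exists_heapMove47_of_lt {k n : ℕ} (hn : n < heapGrundy47 k) :
    ∃ S, HeapMove47 k S ∧ nimSum heapGrundy47 S = n := by
  have hk : 1 ≤ k := by
    by_contra! hk
    simp [heapGrundy47, Nat.lt_one_iff.mp hk] at hn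
  rw [heapGrundy47_of_pos hk] at hn
  split_ifs at hn with heven
  · interval_cases n
    · exact exists_heapMove47_nimSum_eq_zero hk
    · exact exists_heapMove47_nimSum_eq_one hk heven
  · obtain rfl : n = 0 := by omega
    exact exists_heapMove47_nimSum_eq_zero hk

theorem isLeast_heapGrundy47 (k : ℕ) :
    IsLeast (nimSum heapGrundy47 '' {S | HeapMove47 k S})ᶜ (heapGrundy47 k) := by
  constructor
  · rintro ⟨S, hkS, hS⟩
    exact hkS.nimSum_ne hS
  · intro n hn
    by_contra! hlt
    exact hn (exists_heapMove47_of_lt hlt)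

theorem grundy47_single_heap_general (g : Multiset ℕ → ℕ)
    (hg : ∀ G : Multiset ℕ, g G = mex {m | ∃ G', Move47 G G' ∧ g G' = m}) (G : Multiset ℕ) :
    g G = nimSum heapGrundy47 G := by
  refine congrFun (eq_of_mex_recursion wellFounded_move47 hg fun H => ?_) G
  simpa only [move47_iff_sumMove] using
    (mex_eq_of_isLeast (isLeast_nimSum isLeast_heapGrundy47 H)).symm

/-- In the octal game 4.7, the normal-play Grundy value of a single heap of
size `k ≥ 1` is 2 if `k` is even and 1 if `k` is odd. The Grundy function is
characterized by the mex recursion. -/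
theorem grundy47_single_heap
    (g : Multiset ℕ → ℕ)
    (hg : ∀ G : Multiset ℕ, g G = mex {m | ∃ G', Move47 G G' ∧ g G' = m}) :
    ∀ k : ℕ, 1 ≤ k → g {k} = if k % 2 = 0 then 2 else 1 := by
  intro k hk
  rw [grundy47_single_heap_general g hg, nimSum_singleton, heapGrundy47_of_pos hk]
end
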